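/- (Theorem 7: inner bound for the three-receiver BC, with exponentially decaying errors and deterministic encoders.) Let W(y₁,y₂,y₃|x) be a three-receiver BC, let P be a PMF on 𝒳, and let rates satisfy 0 < R_k < min{ I(P, W_k), Σ_{l∈{1,2,3}\{k}} I(P, W_l) } for every k ∈ {1,2,3}. Then there exist τ > 0 and n₀ ∈ ℕ such that for every n ≥ n₀ there exists an (n, {ℳ_k, e^{−nτ}, e^{−nτ}}_{k∈{1,2,3}}) average-error ID code for the BC with (1/n)·log log |ℳ_k| ≥ R_k for all k, in which every encoding PMF Q_{m₁,m₂,m₃} is a point mass on a single sequence in 𝒳ⁿ (deterministic encoder). -/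

import Mathlib

open scoped Classical
open Finset

noncomputable section

/-- `P` is a probability mass function on the finite type `X`. -/
def IsPMF {X : Type*} [Fintype X] (P : X → ℝ) : Prop :=
  (∀ x, 0 ≤ P x) ∧ ∑ x, P x = 1

/-- `W` is a (discrete memoryless) channel from `X` to `Y`. -/
def IsChannel {X Y : Type*} [Fintype Y] (W : X → Y → ℝ) : Prop :=
  (∀ x y, 0 ≤ W x y) ∧ ∀ x, ∑ y, W x y = 1

/-- The `n`-fold memoryless extension `W^n(𝐲|𝐱) = ∏ᵢ W(yᵢ|xᵢ)`. -/
def Wn {X Y : Type*} (W : X → Y → ℝ) (n : ℕ) (x : Fin n → X) (y : Fin n → Y) : ℝ :=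
  ∏ i, W (x i) (y i)

/-- Mutual information `I(P,W)` (natural logarithm), with the convention that
terms with `P x * W x y = 0` contribute `0`. -/
def mutInf {X Y : Type*} [Fintype X] [Fintype Y] (P : X → ℝ) (W : X → Y → ℝ) : ℝ :=
  ∑ x, ∑ y, if P x * W x y = 0 then 0
    else P x * W x y * Real.log (W x y / ∑ x', P x' * W x' y)

/-- The error requirements of an `(n, M, l1, l2)` ID code for the DMC `W`:
maximum probability of missed identification at most `l1`, maximum probability
of wrong identification at most `l2`. -/
def IDCodeErr {X Y M : Type*} [Fintype X] [Fintype Y]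
    (n : ℕ) (W : X → Y → ℝ) (Q : M → (Fin n → X) → ℝ)
    (D : M → Finset (Fin n → Y)) (l1 l2 : ℝ) : Prop :=
  (∀ m, ∑ x, Q m x * ∑ y ∈ (D m)ᶜ, Wn W n x y ≤ l1) ∧
  (∀ m m', m ≠ m' → ∑ x, Q m x * ∑ y ∈ D m', Wn W n x y ≤ l2)

/-- `(n, M, l1, l2)` ID code for the DMC `W`. -/
def IsIDCode {X Y M : Type*} [Fintype X] [Fintype Y]
    (n : ℕ) (W : X → Y → ℝ) (Q : M → (Fin n → X) → ℝ)
    (D : M → Finset (Fin n → Y)) (l1 l2 : ℝ) : Prop :=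
  (∀ m, IsPMF (Q m)) ∧ IDCodeErr n W Q D l1 l2

/-- `W` is a three-receiver broadcast channel from `X` to `Y1 × Y2 × Y3`. -/
def IsBC3 {X Y1 Y2 Y3 : Type*} [Fintype Y1] [Fintype Y2] [Fintype Y3]
    (W : X → Y1 → Y2 → Y3 → ℝ) : Prop :=
  (∀ x y1 y2 y3, 0 ≤ W x y1 y2 y3) ∧ ∀ x, ∑ y1, ∑ y2, ∑ y3, W x y1 y2 y3 = 1

/-- Marginal channel to receiver 1. -/
def marg1 {X Y1 Y2 Y3 : Type*} [Fintype Y2] [Fintype Y3]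
    (W : X → Y1 → Y2 → Y3 → ℝ) : X → Y1 → ℝ :=
  fun x y1 => ∑ y2, ∑ y3, W x y1 y2 y3

/-- Marginal channel to receiver 2. -/
def marg2 {X Y1 Y2 Y3 : Type*} [Fintype Y1] [Fintype Y3]
    (W : X → Y1 → Y2 → Y3 → ℝ) : X → Y2 → ℝ :=
  fun x y2 => ∑ y1, ∑ y3, W x y1 y2 y3

/-- Marginal channel to receiver 3. -/
def marg3 {X Y1 Y2 Y3 : Type*} [Fintype Y1] [Fintype Y2]
    (W : X → Y1 → Y2 → Y3 → ℝ) : X → Y3 → ℝ :=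
  fun x y3 => ∑ y1, ∑ y2, W x y1 y2 y3

/-- Average-error ID code for the three-receiver BC: every `Q m1 m2 m3` is a
PMF on `Xⁿ`, and for each receiver `k` the mixtures (averaging uniformly over
the other two messages) form an ID code for the marginal channel `W_k`. -/
def IsBC3IDCode {X Y1 Y2 Y3 : Type*}
    [Fintype X] [Fintype Y1] [Fintype Y2] [Fintype Y3]
    (n k1 k2 k3 : ℕ) (W : X → Y1 → Y2 → Y3 → ℝ)
    (Q : Fin k1 → Fin k2 → Fin k3 → (Fin n → X) → ℝ)
    (D1 : Fin k1 → Finset (Fin n → Y1))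
    (D2 : Fin k2 → Finset (Fin n → Y2))
    (D3 : Fin k3 → Finset (Fin n → Y3))
    (l11 l21 l12 l22 l13 l23 : ℝ) : Prop :=
  (∀ m1 m2 m3, IsPMF (Q m1 m2 m3)) ∧
  IDCodeErr n (marg1 W)
    (fun m1 x => ((k2 * k3 : ℕ) : ℝ)⁻¹ * ∑ m2, ∑ m3, Q m1 m2 m3 x) D1 l11 l21 ∧
  IDCodeErr n (marg2 W)
    (fun m2 x => ((k1 * k3 : ℕ) : ℝ)⁻¹ * ∑ m1, ∑ m3, Q m1 m2 m3 x) D2 l12 l22 ∧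
  IDCodeErr n (marg3 W)
    (fun m3 x => ((k1 * k2 : ℕ) : ℝ)⁻¹ * ∑ m1, ∑ m2, Q m1 m2 m3 x) D3 l13 l23

/-!
Draw a pool of about `exp (nρ)` independent `P`-distributed input sequences and let receiver `k`
test for each of them whether its likelihood ratio exceeds `exp (nJ)` with `J` just below `I_k`.
After expurgation, the true sequence passes its test except with exponentially small probability,
and the other sequences cause at most about `exp (n(ρ - J))` false alarms in total. The rate `ρ` may
exceed `I_k`: each message of receiver `k` gets a random subset of the pool of density
`exp (-n(ρ - r_k))` with `R_k < r_k < min ρ I_k`, and at this density the false alarms are diluted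
to an exponentially small fraction. Chernoff bounds decay doubly exponentially, so this works for
doubly exponentially many messages at once.

The encoder of `(m₁, m₂, m₃)` draws one point of the intersection of the three subsets. Typically
this intersection has about `exp (n(r₁ + r₂ + r₃ - 2ρ))` points, and by the hypothesis on the rates
one can choose `ρ` such that the exponent is positive. Averaged over the messages of the other two
receivers, the law of the point drawn is dominated, up to exponentially small terms, by a constant
multiple of the uniform law on the subset of each single receiver, and concentration of these
averages shows that one fixed outcome of all draws serves all receivers and all messages.
-/

section Probability

/-- Expectation of `F` under the weights `μ` on a finite type. -/
def expectation {Ω : Type*} [Fintype Ω] (μ F : Ω → ℝ) : ℝ := ∑ ω, μ ω * F ω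

/-- Probability of the event `A` under the weights `μ` on a finite type. -/
def probOf {Ω : Type*} [Fintype Ω] (μ : Ω → ℝ) (A : Ω → Prop) : ℝ :=
  expectation μ fun ω => if A ω then 1 else 0

variable {Ω J : Type*} [Fintype Ω] {μ F G : Ω → ℝ} {A B : Ω → Prop} {c : ℝ}

lemma expectation_const (hμ : IsPMF μ) (c : ℝ) : expectation μ (fun _ => c) = c := by
  rw [expectation, ← sum_mul, hμ.2, one_mul]

lemma expectation_add (μ F G : Ω → ℝ) :
    expectation μ (fun ω => F ω + G ω) = expectation μ F + expectation μ G := by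
  simp only [expectation, mul_add, sum_add_distrib]

lemma expectation_const_mul (c : ℝ) (μ F : Ω → ℝ) :
    expectation μ (fun ω => c * F ω) = c * expectation μ F := by
  simp only [expectation, mul_sum, mul_left_comm]

lemma expectation_sum (s : Finset J) (μ : Ω → ℝ) (F : J → Ω → ℝ) :
    expectation μ (fun ω => ∑ j ∈ s, F j ω) = ∑ j ∈ s, expectation μ (F j) := by
  simp only [expectation, mul_sum]
  exact sum_comm

lemma expectation_mono (hμ : IsPMF μ) (h : ∀ ω, F ω ≤ G ω) :
    expectation μ F ≤ expectation μ G :=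
  sum_le_sum fun ω _ => mul_le_mul_of_nonneg_left (h ω) (hμ.1 ω)

lemma expectation_nonneg (hμ : IsPMF μ) (h : ∀ ω, 0 ≤ F ω) : 0 ≤ expectation μ F :=
  sum_nonneg fun ω _ => mul_nonneg (hμ.1 ω) (h ω)

lemma expectation_le_of_forall_le (hμ : IsPMF μ) (h : ∀ ω, F ω ≤ c) : expectation μ F ≤ c :=
  (expectation_mono hμ h).trans_eq (expectation_const hμ c)

lemma exists_le_expectation (hμ : IsPMF μ) : ∃ ω, F ω ≤ expectation μ F := by
  by_contra! hlt
  obtain ⟨ω, -, hω⟩ : ∃ ω ∈ univ, 0 < μ ω := by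
    by_contra! hnp
    linarith [sum_nonpos hnp, hμ.2]
  have hstrict : ∑ ω, μ ω * expectation μ F < ∑ ω, μ ω * F ω :=
    sum_lt_sum (fun ω _ => mul_le_mul_of_nonneg_left (hlt ω).le (hμ.1 ω))
      ⟨ω, mem_univ ω, mul_lt_mul_of_pos_left (hlt ω) hω⟩
  rw [← sum_mul, hμ.2, one_mul] at hstrict
  exact lt_irrefl _ hstrict

lemma probOf_le_expectation (hμ : IsPMF μ) (hF : ∀ ω, 0 ≤ F ω) (hA : ∀ ω, A ω → 1 ≤ F ω) :
    probOf μ A ≤ expectation μ F := by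
  refine expectation_mono hμ fun ω => ?_
  split_ifs with h
  exacts [hA ω h, hF ω]

lemma probOf_mono_of_pos (hμ : IsPMF μ) (h : ∀ ω, 0 < μ ω → A ω → B ω) :
    probOf μ A ≤ probOf μ B := by
  refine sum_le_sum fun ω _ => ?_
  obtain h0 | hpos := (hμ.1 ω).eq_or_lt
  · rw [← h0, zero_mul, zero_mul]
  · refine mul_le_mul_of_nonneg_left ?_ hpos.le
    beta_reduce
    split_ifs with hA hB hB
    exacts [le_rfl, absurd (h ω hpos hA) hB, zero_le_one, le_rfl]

lemma probOf_or_lt_add {a b : ℝ} (hμ : IsPMF μ) (hA : probOf μ A < a) (hB : probOf μ B < b) :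
    probOf μ (fun ω => A ω ∨ B ω) < a + b := by
  refine lt_of_le_of_lt ?_ (add_lt_add hA hB)
  simp only [probOf, ← expectation_add]
  refine probOf_le_expectation hμ (fun ω => by split_ifs <;> norm_num) ?_
  rintro ω (h | h) <;> split_ifs <;> norm_num

lemma probOf_exists_le_sum [Fintype J] (hμ : IsPMF μ) (A : J → Ω → Prop) :
    probOf μ (fun ω => ∃ j, A j ω) ≤ ∑ j, probOf μ (A j) := by
  have hind : ∀ j ω, (0 : ℝ) ≤ if A j ω then 1 else 0 := fun j ω => by split_ifs <;> norm_num
  simp only [probOf, ← expectation_sum]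
  refine probOf_le_expectation hμ (fun ω => sum_nonneg fun j _ => hind j ω) ?_
  rintro ω ⟨j, hj⟩
  simpa only [if_pos hj] using
    single_le_sum (f := fun j => if A j ω then (1 : ℝ) else 0) (fun j _ => hind j ω) (mem_univ j)

lemma probOf_exists_le [Fintype J] (hμ : IsPMF μ) (A : J → Ω → Prop)
    (h : ∀ j, probOf μ (A j) ≤ c) : probOf μ (fun ω => ∃ j, A j ω) ≤ Fintype.card J * c :=
  calc probOf μ (fun ω => ∃ j, A j ω) ≤ ∑ j, probOf μ (A j) := probOf_exists_le_sum hμ A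
    _ ≤ ∑ _j : J, c := sum_le_sum fun j _ => h j
    _ = Fintype.card J * c := by rw [sum_const, card_univ, nsmul_eq_mul]

lemma exists_not_of_probOf_lt_one (hμ : IsPMF μ) (h : probOf μ A < 1) : ∃ ω, ¬ A ω := by
  by_contra! hA
  simp only [probOf, hA, if_true, expectation_const hμ, lt_irrefl] at h

lemma probOf_le_expectation_exp (hμ : IsPMF μ) (hA : ∀ ω, A ω → 0 ≤ F ω) :
    probOf μ A ≤ expectation μ fun ω => Real.exp (F ω) :=
  probOf_le_expectation hμ (fun _ => (Real.exp_pos _).le) fun ω h => Real.one_le_exp (hA ω h)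

lemma probOf_lt_le_exp_of_expectation_exp_le {m t : ℝ} (hμ : IsPMF μ)
    (hF : expectation μ (fun ω => Real.exp (F ω)) ≤ Real.exp (2 * m)) (hm : m ≤ t / 4) :
    probOf μ (fun ω => t < F ω) ≤ Real.exp (-(t / 2)) :=
  calc probOf μ (fun ω => t < F ω)
      ≤ expectation μ fun ω => Real.exp (-t + F ω) :=
        probOf_le_expectation_exp hμ fun ω h => by linarith
    _ = Real.exp (-t) * expectation μ fun ω => Real.exp (F ω) := by
        simp only [Real.exp_add, expectation_const_mul]
    _ ≤ Real.exp (-t) * Real.exp (2 * m) := mul_le_mul_of_nonneg_left hF (Real.exp_pos _).le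
    _ ≤ Real.exp (-(t / 2)) := by
        rw [← Real.exp_add]
        exact Real.exp_le_exp.2 (by linarith)

lemma probOf_lt_le_exp_of_expectation_exp_neg_le {m : ℝ} (hμ : IsPMF μ)
    (hF : expectation μ (fun ω => Real.exp (-F ω)) ≤ Real.exp (-(m / 2))) :
    probOf μ (fun ω => F ω < m / 4) ≤ Real.exp (-(m / 4)) :=
  calc probOf μ (fun ω => F ω < m / 4)
      ≤ expectation μ fun ω => Real.exp (m / 4 + -F ω) :=
        probOf_le_expectation_exp hμ fun ω h => by linarith
    _ = Real.exp (m / 4) * expectation μ fun ω => Real.exp (-F ω) := by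
        simp only [Real.exp_add, expectation_const_mul]
    _ ≤ Real.exp (m / 4) * Real.exp (-(m / 2)) := mul_le_mul_of_nonneg_left hF (Real.exp_pos _).le
    _ = Real.exp (-(m / 4)) := by
        rw [← Real.exp_add]
        ring_nf

lemma exp_le_one_add_two_mul {x : ℝ} (h0 : 0 ≤ x) (h1 : x ≤ 1) : Real.exp x ≤ 1 + 2 * x := by
  have h := (abs_le.1 (Real.abs_exp_sub_one_le (abs_le.2 ⟨by linarith, h1⟩))).2
  rw [abs_of_nonneg h0] at h
  linarith

lemma exp_neg_le_one_sub_half {x : ℝ} (h0 : 0 ≤ x) (h1 : x ≤ 1) :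
    Real.exp (-x) ≤ 1 - x / 2 := by
  rw [Real.exp_neg, inv_le_iff_one_le_mul₀ (Real.exp_pos x)]
  nlinarith [Real.add_one_le_exp x]

end Probability

section ProductWeights

/-- Product of the weights `w i` on a finite power: the law of independent variables. -/
def prodWeight {ι Ω : Type*} [Fintype ι] (w : ι → Ω → ℝ) (ω : ι → Ω) : ℝ := ∏ i, w i (ω i)

variable {ι Ω Q : Type*} [Fintype ι] [DecidableEq ι]

lemma prodWeight_update_mul (w : ι → Ω → ℝ) (ω : ι → Ω) (i : ι) (b : Ω) :
    prodWeight w (Function.update ω i b) * w i (ω i) = prodWeight w ω * w i b := by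
  have h : ∀ j, w j (Function.update ω i b j) =
      Function.update (fun j => w j (ω j)) i (w i b) j := fun j =>
    Function.apply_update (fun j => w j) ω i b j
  simp only [prodWeight, h, prod_update_of_mem (mem_univ i)]
  rw [← mul_prod_erase univ (fun j => w j (ω j)) (mem_univ i), sdiff_singleton_eq_erase]
  ring

variable [Fintype Ω] [Fintype Q] {w : ι → Ω → ℝ}

lemma expectation_prodWeight_prod (w f : ι → Ω → ℝ) :
    expectation (prodWeight w) (fun ω => ∏ i, f i (ω i)) = ∏ i, expectation (w i) (f i) := by
  simp only [expectation, prodWeight, ← prod_mul_distrib, Fintype.prod_sum]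

lemma isPMF_prodWeight (hw : ∀ i, IsPMF (w i)) : IsPMF (prodWeight w) := by
  refine ⟨fun ω => prod_nonneg fun i _ => (hw i).1 _, ?_⟩
  have h := expectation_prodWeight_prod w fun _ _ => 1
  simp only [expectation, prod_const_one, mul_one] at h
  rw [h]
  exact prod_eq_one fun i _ => (hw i).2

lemma expectation_prodWeight_prod_of_injective (hw : ∀ i, IsPMF (w i)) {φ : Q → ι}
    (hφ : φ.Injective) (f : Q → Ω → ℝ) :
    expectation (prodWeight w) (fun ω => ∏ q, f q (ω (φ q))) =
      ∏ q, expectation (w (φ q)) (f q) := by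
  set g : ι → Ω → ℝ := Function.extend φ f fun _ _ => 1
  have hgφ : ∀ q, g (φ q) = f q := fun q => hφ.extend_apply f _ q
  have hg1 : ∀ i ∉ Set.range φ, g i = fun _ => 1 := fun i hi => Function.extend_apply' _ _ _ hi
  calc expectation (prodWeight w) (fun ω => ∏ q, f q (ω (φ q)))
      = expectation (prodWeight w) (fun ω => ∏ i, g i (ω i)) := by
        congr 1 with ω
        exact Fintype.prod_of_injective φ hφ _ _ (fun i hi => by rw [hg1 i hi])
          fun q => by rw [hgφ]
    _ = ∏ i, expectation (w i) (g i) := expectation_prodWeight_prod w g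
    _ = ∏ q, expectation (w (φ q)) (f q) := by
        refine (Fintype.prod_of_injective φ hφ _ _ (fun i hi => ?_) fun q => by rw [hgφ]).symm
        rw [hg1 i hi, expectation_const (hw i)]

/-- Exchanging the coordinate with an independent copy of it is a weight-preserving involution. -/
lemma expectation_prodWeight_update (hw : ∀ i, IsPMF (w i)) (i : ι) (F : (ι → Ω) → ℝ) :
    expectation (prodWeight w) (fun ω => expectation (w i) fun b => F (Function.update ω i b)) =
      expectation (prodWeight w) F := by
  let swap : (ι → Ω) × Ω → (ι → Ω) × Ω := fun z => (Function.update z.1 i z.2, z.1 i)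
  have hswap : swap.Involutive := fun z => by simp [swap]
  calc expectation (prodWeight w) (fun ω => expectation (w i) fun b => F (Function.update ω i b))
      = ∑ z : (ι → Ω) × Ω, prodWeight w z.1 * w i z.2 * F (swap z).1 := by
        simp only [expectation, mul_sum, Fintype.sum_prod_type, mul_assoc, swap]
    _ = ∑ z : (ι → Ω) × Ω, prodWeight w z.1 * w i z.2 * F z.1 := by
        refine Fintype.sum_equiv hswap.toPerm _ _ fun z => ?_
        rw [Function.Involutive.coe_toPerm, ← prodWeight_update_mul]
    _ = expectation (prodWeight w) F := by
        simp only [expectation, Fintype.sum_prod_type, ← sum_mul, ← mul_sum, (hw i).2, mul_one]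

lemma expectation_prodWeight_le_of_update (hw : ∀ i, IsPMF (w i)) (i : ι) {F : (ι → Ω) → ℝ}
    {c : ℝ} (h : ∀ ω, expectation (w i) (fun b => F (Function.update ω i b)) ≤ c) :
    expectation (prodWeight w) F ≤ c := by
  rw [← expectation_prodWeight_update hw i]
  exact expectation_le_of_forall_le (isPMF_prodWeight hw) h

lemma expectation_exp_sum_le (hw : ∀ i, IsPMF (w i)) {φ : Q → ι} (hφ : φ.Injective)
    {X : Q → Ω → ℝ} (h0 : ∀ q b, 0 ≤ X q b) (h1 : ∀ q b, X q b ≤ 1) :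
    expectation (prodWeight w) (fun ω => Real.exp (∑ q, X q (ω (φ q)))) ≤
      Real.exp (2 * ∑ q, expectation (w (φ q)) (X q)) := by
  simp only [mul_sum, Real.exp_sum]
  rw [expectation_prodWeight_prod_of_injective hw hφ fun q b => Real.exp (X q b)]
  refine prod_le_prod (fun q _ => expectation_nonneg (hw _) fun b => (Real.exp_pos _).le)
    fun q _ => ?_
  calc expectation (w (φ q)) (fun b => Real.exp (X q b))
      ≤ expectation (w (φ q)) (fun b => 1 + 2 * X q b) :=
        expectation_mono (hw _) fun b => exp_le_one_add_two_mul (h0 q b) (h1 q b)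
    _ = 2 * expectation (w (φ q)) (X q) + 1 := by
        rw [expectation_add, expectation_const (hw _), expectation_const_mul, add_comm]
    _ ≤ Real.exp (2 * expectation (w (φ q)) (X q)) := Real.add_one_le_exp _

lemma probOf_prodWeight_lt_sum_le (hw : ∀ i, IsPMF (w i)) {φ : Q → ι} (hφ : φ.Injective)
    {X : Q → Ω → ℝ} (h0 : ∀ q b, 0 ≤ X q b) (h1 : ∀ q b, X q b ≤ 1) {t : ℝ}
    (ht : ∑ q, expectation (w (φ q)) (X q) ≤ t / 4) :
    probOf (prodWeight w) (fun ω => t < ∑ q, X q (ω (φ q))) ≤ Real.exp (-(t / 2)) :=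
  probOf_lt_le_exp_of_expectation_exp_le (isPMF_prodWeight hw)
    (expectation_exp_sum_le hw hφ h0 h1) ht

lemma probOf_prodWeight_lt_card_le {w : Q → Ω → ℝ} (hw : ∀ q, IsPMF (w q)) (A : Q → Ω → Prop)
    [∀ q, DecidablePred (A q)] {c t : ℝ} (hA : ∀ q, probOf (w q) (A q) ≤ c)
    (ht : c * Fintype.card Q ≤ t / 4) :
    probOf (prodWeight w) (fun ω => t < #{q | A q (ω q)}) ≤ Real.exp (-(t / 2)) := by
  have hmean : ∑ q, expectation (w q) (fun b => if A q b then 1 else 0) ≤ t / 4 := by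
    calc ∑ q, expectation (w q) (fun b => if A q b then 1 else 0)
        ≤ ∑ _q : Q, c := sum_le_sum fun q _ => by
          refine le_of_eq_of_le ?_ (hA q)
          rw [probOf]
          congr! 3
      _ = c * Fintype.card Q := by rw [sum_const, card_univ, nsmul_eq_mul, mul_comm]
      _ ≤ t / 4 := ht
  simpa only [id, sum_boole] using probOf_prodWeight_lt_sum_le hw Function.injective_id
    (X := fun q b => if A q b then 1 else 0) (fun q b => by split_ifs <;> norm_num)
    (fun q b => by split_ifs <;> norm_num) hmean

lemma probOf_prodWeight_apply_le (hw : ∀ i, IsPMF (w i)) (i : ι) {A : Ω → Prop} {c : ℝ}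
    (hA : probOf (w i) A ≤ c) : probOf (prodWeight w) (fun ω => A (ω i)) ≤ c :=
  expectation_prodWeight_le_of_update hw i fun ω => by
    simpa only [Function.update_self, probOf] using hA

end ProductWeights

section RandomSubset

/-- Law of the random subset of `ι` that contains each point independently with probability
`p`. -/
def bernoulliSubset (ι : Type*) [Fintype ι] (p : ℝ) (S : Finset ι) : ℝ := p ^ #S * (1 - p) ^ #Sᶜ

variable {ι : Type*} [Fintype ι] {p : ℝ}

lemma expectation_bernoulliSubset_prod (p : ℝ) (f : ι → ℝ) :
    expectation (bernoulliSubset ι p) (fun S => ∏ v ∈ S, f v) = ∏ v, (p * f v + (1 - p)) := by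
  rw [Fintype.prod_add]
  refine sum_congr rfl fun S _ => ?_
  rw [bernoulliSubset, prod_mul_distrib, prod_const, prod_const]
  ring

lemma isPMF_bernoulliSubset (h0 : 0 ≤ p) (h1 : p ≤ 1) : IsPMF (bernoulliSubset ι p) := by
  refine ⟨fun S => mul_nonneg (pow_nonneg h0 _) (pow_nonneg (sub_nonneg.2 h1) _), ?_⟩
  simpa only [expectation, prod_const_one, mul_one, add_sub_cancel] using
    expectation_bernoulliSubset_prod (ι := ι) p fun _ => 1

lemma probOf_mem_bernoulliSubset (h0 : 0 ≤ p) (h1 : p ≤ 1) (v : ι) :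
    probOf (bernoulliSubset ι p) (fun S => v ∈ S) = p := by
  have hfactor : ∀ u, p * (if u = v then 0 else 1) + (1 - p) = if u = v then 1 - p else 1 :=
    fun u => by split_ifs <;> ring
  calc probOf (bernoulliSubset ι p) (fun S => v ∈ S)
      = expectation (bernoulliSubset ι p)
          (fun S => 1 + -1 * ∏ u ∈ S, if u = v then (0 : ℝ) else 1) := by
        rw [probOf]
        congr 1 with S
        by_cases hv : v ∈ S
        · rw [if_pos hv, prod_eq_zero hv (by rw [if_pos rfl]), mul_zero, add_zero]
        · rw [if_neg hv, prod_eq_one fun u hu => if_neg (ne_of_mem_of_not_mem hu hv)]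
          norm_num
    _ = 1 + -1 * ∏ u, if u = v then 1 - p else 1 := by
        rw [expectation_add, expectation_const (isPMF_bernoulliSubset h0 h1),
          expectation_const_mul, expectation_bernoulliSubset_prod]
        simp only [hfactor]
    _ = p := by
        rw [prod_ite_eq', if_pos (mem_univ v)]
        ring

lemma probOf_lt_sum_bernoulliSubset_le (h0 : 0 ≤ p) (h1 : p ≤ 1) {g : ι → ℝ}
    (hg0 : ∀ v, 0 ≤ g v) (hg1 : ∀ v, g v ≤ 1) {t : ℝ} (ht : p * ∑ v, g v ≤ t / 4) :
    probOf (bernoulliSubset ι p) (fun S => t < ∑ v ∈ S, g v) ≤ Real.exp (-(t / 2)) := by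
  refine probOf_lt_le_exp_of_expectation_exp_le (isPMF_bernoulliSubset h0 h1) ?_ ht
  simp only [Real.exp_sum, mul_sum, expectation_bernoulliSubset_prod]
  refine prod_le_prod (fun v _ => add_nonneg (mul_nonneg h0 (Real.exp_pos _).le)
    (sub_nonneg.2 h1)) fun v _ => ?_
  calc p * Real.exp (g v) + (1 - p) ≤ p * (1 + 2 * g v) + (1 - p) := by
        gcongr
        exact exp_le_one_add_two_mul (hg0 v) (hg1 v)
    _ = 2 * (p * g v) + 1 := by ring
    _ ≤ Real.exp (2 * (p * g v)) := Real.add_one_le_exp _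

lemma probOf_sum_bernoulliSubset_lt_le (h0 : 0 ≤ p) (h1 : p ≤ 1) {g : ι → ℝ}
    (hg0 : ∀ v, 0 ≤ g v) (hg1 : ∀ v, g v ≤ 1) :
    probOf (bernoulliSubset ι p) (fun S => ∑ v ∈ S, g v < (p * ∑ v, g v) / 4) ≤
      Real.exp (-((p * ∑ v, g v) / 4)) := by
  refine probOf_lt_le_exp_of_expectation_exp_neg_le (isPMF_bernoulliSubset h0 h1) ?_
  simp only [← sum_neg_distrib, Real.exp_sum, mul_sum, sum_div, expectation_bernoulliSubset_prod]
  refine prod_le_prod (fun v _ => add_nonneg (mul_nonneg h0 (Real.exp_pos _).le)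
    (sub_nonneg.2 h1)) fun v _ => ?_
  calc p * Real.exp (-g v) + (1 - p) ≤ p * (1 - g v / 2) + (1 - p) := by
        gcongr
        exact exp_neg_le_one_sub_half (hg0 v) (hg1 v)
    _ = -(p * g v / 2) + 1 := by ring
    _ ≤ Real.exp (-(p * g v / 2)) := Real.add_one_le_exp _

lemma probOf_card_inter_bernoulliSubset_lt_le (h0 : 0 ≤ p) (h1 : p ≤ 1) (A : Finset ι) :
    probOf (bernoulliSubset ι p) (fun S => #(A ∩ S) < p / 4 * #A) ≤ Real.exp (-(p / 4 * #A)) := by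
  have h := probOf_sum_bernoulliSubset_lt_le h0 h1 (g := fun v => if v ∈ A then 1 else 0)
    (fun v => by split_ifs <;> norm_num) (fun v => by split_ifs <;> norm_num)
  simpa only [sum_boole, filter_mem_eq_inter, inter_comm _ A, inter_univ, mul_div_right_comm]
    using h

end RandomSubset

section SpreadFamily

variable {ι M Q Q' : Type*} [Fintype Q] [Fintype Q']

/-- The family `U` meets sets in proportion: a set `A` with `s ≤ a * #A` has fewer than `a * #A`
points in common with at most a fraction `ε` of the members, and each point lies in at most a
fraction `b` of the members. -/
structure IsSpread (a b ε s : ℝ) (U : Q → Finset ι) : Prop where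
  card_small_inter_le : ∀ A : Finset ι, s ≤ a * #A →
    (#{q | (#(A ∩ U q) : ℝ) < a * #A} : ℝ) ≤ ε * Fintype.card Q
  card_mem_le : ∀ v, (#{q | v ∈ U q} : ℝ) ≤ b * Fintype.card Q

lemma IsSpread.card_small_inter_inter_le {a b ε s a' b' ε' : ℝ} {U : Q → Finset ι}
    {U' : Q' → Finset ι} (hU : IsSpread a b ε s U) (hU' : IsSpread a' b' ε' s U') (ha : 0 ≤ a)
    (ha' : 0 ≤ a') (ha'1 : a' ≤ 1) (hε' : 0 ≤ ε') (A : Finset ι) (hA : s ≤ a * a' * #A) :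
    (#{q : Q × Q' | (#(A ∩ (U q.1 ∩ U' q.2)) : ℝ) < a * a' * #A} : ℝ) ≤
      (ε + ε') * Fintype.card (Q × Q') := by
  have hA' : s ≤ a * #A := hA.trans (by gcongr; exact mul_le_of_le_one_right ha ha'1)
  have hrow : ∀ q, (#{q' | (#(A ∩ (U q ∩ U' q')) : ℝ) < a * a' * #A} : ℝ) ≤
      (if (#(A ∩ U q) : ℝ) < a * #A then 1 else 0) * Fintype.card Q' + ε' * Fintype.card Q' := by
    intro q
    split_ifs with hq
    · have hcard : (#{q' | (#(A ∩ (U q ∩ U' q')) : ℝ) < a * a' * #A} : ℝ) ≤ Fintype.card Q' :=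
        Nat.cast_le.2 (card_le_univ _)
      have : 0 ≤ ε' * Fintype.card Q' := by positivity
      linarith
    · have hle : a * a' * #A ≤ a' * #(A ∩ U q) := by
        nlinarith [mul_le_mul_of_nonneg_left (not_lt.1 hq) ha']
      rw [zero_mul, zero_add]
      refine le_trans ?_ (hU'.card_small_inter_le (A ∩ U q) (hA.trans hle))
      refine Nat.cast_le.2 (card_le_card (monotone_filter_right _ fun q' _ h => ?_))
      rw [inter_assoc]
      exact lt_of_lt_of_le h hle
  calc (#{q : Q × Q' | (#(A ∩ (U q.1 ∩ U' q.2)) : ℝ) < a * a' * #A} : ℝ)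
      = ∑ q, (#{q' | (#(A ∩ (U q ∩ U' q')) : ℝ) < a * a' * #A} : ℝ) := by
        simp only [← sum_boole, Fintype.sum_prod_type]
    _ ≤ ∑ q, ((if (#(A ∩ U q) : ℝ) < a * #A then 1 else 0) * (Fintype.card Q' : ℝ) +
        ε' * Fintype.card Q') := sum_le_sum fun q _ => hrow q
    _ = #{q | (#(A ∩ U q) : ℝ) < a * #A} * (Fintype.card Q' : ℝ) +
        Fintype.card Q * (ε' * Fintype.card Q') := by
        rw [sum_add_distrib, ← sum_mul, sum_boole, sum_const, card_univ, nsmul_eq_mul]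
    _ ≤ ε * Fintype.card Q * Fintype.card Q' + Fintype.card Q * (ε' * Fintype.card Q') := by
        gcongr
        exact hU.card_small_inter_le A hA'
    _ = (ε + ε') * Fintype.card (Q × Q') := by
        rw [Fintype.card_prod, Nat.cast_mul]
        ring

lemma IsSpread.inter {a b ε s a' b' ε' : ℝ} {U : Q → Finset ι} {U' : Q' → Finset ι}
    (hU : IsSpread a b ε s U) (hU' : IsSpread a' b' ε' s U') (ha : 0 ≤ a) (ha' : 0 ≤ a')
    (ha'1 : a' ≤ 1) (hb : 0 ≤ b) (hε' : 0 ≤ ε') :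
    IsSpread (a * a') (b * b') (ε + ε') s fun q : Q × Q' => U q.1 ∩ U' q.2 where
  card_small_inter_le := hU.card_small_inter_inter_le hU' ha ha' ha'1 hε'
  card_mem_le v :=
    calc (#{q : Q × Q' | v ∈ U q.1 ∩ U' q.2} : ℝ) = #{q | v ∈ U q} * #{q' | v ∈ U' q'} := by
          simp only [mem_inter]
          rw [← univ_product_univ, filter_product (fun q => v ∈ U q) fun q' => v ∈ U' q',
            card_product, Nat.cast_mul]
      _ ≤ b * Fintype.card Q * (b' * Fintype.card Q') := by
          gcongr
          exacts [hU.card_mem_le v, hU'.card_mem_le v]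
      _ = b * b' * Fintype.card (Q × Q') := by
          rw [Fintype.card_prod, Nat.cast_mul]
          ring

lemma IsSpread.sum_sum_inter_le {a b ε s : ℝ} {U : Q → Finset ι} (hU : IsSpread a b ε s U)
    (S : Finset ι) {g : ι → ℝ} (h0 : ∀ v, 0 ≤ g v) :
    ∑ q, ∑ v ∈ S ∩ U q, g v ≤ (∑ v ∈ S, g v) * (b * Fintype.card Q) :=
  calc ∑ q, ∑ v ∈ S ∩ U q, g v = ∑ v ∈ S, g v * #{q | v ∈ U q} := by
        simp only [← filter_mem_eq_inter, sum_filter]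
        rw [sum_comm]
        simp only [← sum_filter, sum_const, nsmul_eq_mul, mul_comm]
    _ ≤ (∑ v ∈ S, g v) * (b * Fintype.card Q) := by
        rw [sum_mul]
        exact sum_le_sum fun v _ => mul_le_mul_of_nonneg_left (hU.card_mem_le v) (h0 v)

/-- Numerical conditions under which `K` independent random subsets of density `p` of a set of
`N` points form a family suitable for identification up to the error level `ε`: `s` is the size
from which sets have to be met in proportion, `γ` bounds the total wrong detection probability
of a single point and `δ` its missed detection probability. -/
structure IsAdmissible (N K p ε s γ δ : ℝ) : Prop where
  density_pos : 0 < p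
  level_le_one : ε ≤ 1
  interference_nonneg : 0 ≤ γ
  density_le : 16 * p * (1 + γ) ≤ ε
  miss_le : 4 * δ ≤ ε
  exp_neg_le : Real.exp (-s) ≤ ε / 4
  log_card_le : 4 * (Real.log K + 3) ≤ ε * (p * N)
  ground_le : 2 * (N + 3) ≤ p * K

namespace IsAdmissible

variable {N K p ε s γ δ : ℝ}

lemma density_le_level (h : IsAdmissible N K p ε s γ δ) : p ≤ ε := by
  nlinarith [h.density_le, mul_nonneg h.density_pos.le h.interference_nonneg, h.density_pos]

lemma density_le_one (h : IsAdmissible N K p ε s γ δ) : p ≤ 1 :=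
  h.density_le_level.trans h.level_le_one

lemma level_pos (h : IsAdmissible N K p ε s γ δ) : 0 < ε :=
  h.density_pos.trans_le h.density_le_level

lemma log_card_le_ground (h : IsAdmissible N K p ε s γ δ) (hN : 0 ≤ N) :
    4 * (Real.log K + 3) ≤ p * N :=
  h.log_card_le.trans (mul_le_of_le_one_left (mul_nonneg h.density_pos.le hN) h.level_le_one)

end IsAdmissible

lemma mul_exp_neg_lt_one_fifth {c y : ℝ} (h : Real.log c + 3 ≤ y) :
    c * Real.exp (-y) < 1 / 5 :=
  calc c * Real.exp (-y) ≤ Real.exp (Real.log c) * Real.exp (-y) :=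
        mul_le_mul_of_nonneg_right (Real.le_exp_log c) (Real.exp_pos _).le
    _ ≤ Real.exp (-3) := by
        rw [← Real.exp_add]
        exact Real.exp_le_exp.2 (by linarith)
    _ < 1 / 5 := by
        rw [Real.exp_neg, inv_lt_comm₀ (Real.exp_pos 3) (by norm_num)]
        linarith [Real.quadratic_le_exp_of_nonneg (x := 3) (by norm_num)]

variable [Fintype ι] [Fintype M]

/-- Law of a family of independent random subsets of density `p`. -/
def bernoulliFamily (M ι : Type*) [Fintype M] [Fintype ι] (p : ℝ) : (M → Finset ι) → ℝ :=
  prodWeight fun _ : M => bernoulliSubset ι p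

lemma isPMF_bernoulliFamily {p : ℝ} (h0 : 0 ≤ p) (h1 : p ≤ 1) : IsPMF (bernoulliFamily M ι p) :=
  isPMF_prodWeight fun _ => isPMF_bernoulliSubset h0 h1

variable {p ε s γ δ : ℝ}

local notation "N" => (Fintype.card ι : ℝ)
local notation "K" => (Fintype.card M : ℝ)

lemma probOf_exists_large_card_lt_one_fifth (h : IsAdmissible N K p ε s γ δ) :
    probOf (bernoulliFamily M ι p) (fun V => ∃ m, 4 * (p * N) < #(V m)) < 1 / 5 := by
  have hp := h.density_pos.le
  have hS := isPMF_bernoulliSubset (ι := ι) hp h.density_le_one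
  have hone : ∀ m : M, probOf (bernoulliFamily M ι p) (fun V => 4 * (p * N) < #(V m)) ≤
      Real.exp (-(4 * (p * N) / 2)) := fun m => by
    refine probOf_prodWeight_apply_le (fun _ => hS) m (A := fun S => 4 * (p * N) < #S) ?_
    have htail := probOf_lt_sum_bernoulliSubset_le (ι := ι) hp h.density_le_one (g := fun _ => 1)
      (t := 4 * (p * N)) (fun _ => zero_le_one) (fun _ => le_rfl)
      (by rw [sum_const, card_univ, nsmul_eq_mul, mul_one]; linarith)
    simpa only [sum_const, nsmul_eq_mul, mul_one] using htail
  refine (probOf_exists_le (isPMF_prodWeight fun _ => hS) _ hone).trans_lt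
    (mul_exp_neg_lt_one_fifth ?_)
  have hpN : 0 ≤ p * N := by positivity
  linarith [h.log_card_le_ground (Nat.cast_nonneg _)]

lemma probOf_exists_small_card_lt_one_fifth (h : IsAdmissible N K p ε s γ δ) :
    probOf (bernoulliFamily M ι p) (fun V => ∃ m, #(V m) < p / 4 * N) < 1 / 5 := by
  have hS := isPMF_bernoulliSubset (ι := ι) h.density_pos.le h.density_le_one
  have hone : ∀ m : M, probOf (bernoulliFamily M ι p) (fun V => #(V m) < p / 4 * N) ≤
      Real.exp (-(p / 4 * N)) := fun m => by
    refine probOf_prodWeight_apply_le (fun _ => hS) m (A := fun S => #S < p / 4 * N) ?_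
    simpa only [univ_inter, card_univ] using
      probOf_card_inter_bernoulliSubset_lt_le h.density_pos.le h.density_le_one (univ : Finset ι)
  refine (probOf_exists_le (isPMF_prodWeight fun _ => hS) _ hone).trans_lt
    (mul_exp_neg_lt_one_fifth ?_)
  linarith [h.log_card_le_ground (Nat.cast_nonneg _)]

lemma probOf_exists_large_multiplicity_lt_one_fifth (h : IsAdmissible N K p ε s γ δ) :
    probOf (bernoulliFamily M ι p) (fun V => ∃ v, 4 * p * K < #{m | v ∈ V m}) < 1 / 5 := by
  have hS := isPMF_bernoulliSubset (ι := ι) h.density_pos.le h.density_le_one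
  have hone : ∀ v : ι, probOf (bernoulliFamily M ι p) (fun V => 4 * p * K < #{m | v ∈ V m}) ≤
      Real.exp (-(4 * p * K / 2)) := fun v =>
    probOf_prodWeight_lt_card_le (fun _ => hS) (fun _ S => v ∈ S)
      (fun _ => (probOf_mem_bernoulliSubset h.density_pos.le h.density_le_one v).le) (by linarith)
  refine (probOf_exists_le (isPMF_prodWeight fun _ => hS) _ hone).trans_lt
    (mul_exp_neg_lt_one_fifth ?_)
  linarith [h.ground_le, Real.log_le_self (Nat.cast_nonneg (Fintype.card ι))]

lemma probOf_exists_small_inter_lt_one_fifth (h : IsAdmissible N K p ε s γ δ) :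
    probOf (bernoulliFamily M ι p) (fun V => ∃ A : Finset ι, s ≤ p / 4 * #A ∧
      ε * K < #{m | (#(A ∩ V m) : ℝ) < p / 4 * #A}) < 1 / 5 := by
  have hS := isPMF_bernoulliSubset (ι := ι) h.density_pos.le h.density_le_one
  have hone : ∀ A : Finset ι, probOf (bernoulliFamily M ι p) (fun V => s ≤ p / 4 * #A ∧
      ε * K < #{m | (#(A ∩ V m) : ℝ) < p / 4 * #A}) ≤ Real.exp (-(ε * K / 2)) := fun A => by
    by_cases hA : s ≤ p / 4 * #A
    · simp only [hA, true_and]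
      refine probOf_prodWeight_lt_card_le (c := ε / 4) (fun _ => hS)
        (fun _ S => (#(A ∩ S) : ℝ) < p / 4 * #A) (fun _ => ?_) (by linarith)
      exact (probOf_card_inter_bernoulliSubset_lt_le h.density_pos.le h.density_le_one A).trans
        ((Real.exp_le_exp.2 (neg_le_neg hA)).trans h.exp_neg_le)
    · simp only [hA, false_and, probOf, if_false, expectation, mul_zero, sum_const_zero]
      exact (Real.exp_pos _).le
  refine (probOf_exists_le (isPMF_prodWeight fun _ => hS) _ hone).trans_lt
    (mul_exp_neg_lt_one_fifth ?_)
  have hlog : Real.log (Fintype.card (Finset ι)) ≤ N := by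
    rw [Fintype.card_finset, Nat.cast_pow, Real.log_pow, Nat.cast_ofNat]
    exact mul_le_of_le_one_right (Nat.cast_nonneg _) (by linarith [Real.log_two_lt_d9])
  have hpε : p * K ≤ ε * K := mul_le_mul_of_nonneg_right h.density_le_level (Nat.cast_nonneg _)
  linarith [h.ground_le]

/-- The interference is controlled conditionally on `V m'`, whose size may be assumed typical. -/
lemma probOf_exists_interference_lt_one_fifth (h : IsAdmissible N K p ε s γ δ)
    {F : Finset ι → ι → ℝ} (hF0 : ∀ V v, 0 ≤ F V v) (hF1 : ∀ V v, F V v ≤ 1)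
    (hF : ∀ V, ∑ v, F V v ≤ #V * (1 + γ)) :
    probOf (bernoulliFamily M ι p) (fun V => ∃ q : M × M, q.1 ≠ q.2 ∧
      (#(V q.2) : ℝ) ≤ 4 * (p * N) ∧ ε * (p * N) < ∑ v ∈ V q.1, F (V q.2) v) < 1 / 5 := by
  have hp := h.density_pos.le
  have hS := isPMF_bernoulliSubset (ι := ι) hp h.density_le_one
  have hone : ∀ q : M × M, probOf (bernoulliFamily M ι p) (fun V => q.1 ≠ q.2 ∧
      (#(V q.2) : ℝ) ≤ 4 * (p * N) ∧ ε * (p * N) < ∑ v ∈ V q.1, F (V q.2) v) ≤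
      Real.exp (-(ε * (p * N) / 2)) := by
    rintro ⟨m, m'⟩
    refine expectation_prodWeight_le_of_update (fun _ => hS) m fun V => ?_
    by_cases hcond : m ≠ m' ∧ (#(V m') : ℝ) ≤ 4 * (p * N)
    · simp only [ne_eq, hcond.1, not_false_eq_true, true_and, Function.update_self,
        Function.update_of_ne hcond.1.symm, hcond.2]
      refine probOf_lt_sum_bernoulliSubset_le hp h.density_le_one (hF0 _) (hF1 _) ?_
      have hγ := h.interference_nonneg
      calc p * ∑ v, F (V m') v ≤ p * (4 * (p * N) * (1 + γ)) := by
            gcongr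
            exact (hF _).trans (mul_le_mul_of_nonneg_right hcond.2 (by linarith))
        _ = 16 * p * (1 + γ) * (p * N) / 4 := by ring
        _ ≤ ε * (p * N) / 4 := by
            gcongr
            exact h.density_le
    · refine expectation_le_of_forall_le hS fun S => ?_
      rw [if_neg]
      · exact (Real.exp_pos _).le
      · rintro ⟨hne, hcard, -⟩
        rw [Function.update_of_ne hne.symm] at hcard
        exact hcond ⟨hne, hcard⟩
  refine (probOf_exists_le (isPMF_prodWeight fun _ => hS) _ hone).trans_lt
    (mul_exp_neg_lt_one_fifth ?_)
  rw [Fintype.card_prod, Nat.cast_mul, ← sq, Real.log_pow, Nat.cast_ofNat]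
  linarith [h.log_card_le]

lemma exists_isSpread_of_isAdmissible (h : IsAdmissible N K p ε s γ δ)
    {F : Finset ι → ι → ℝ} (hF0 : ∀ V v, 0 ≤ F V v) (hF1 : ∀ V v, F V v ≤ 1)
    (hF : ∀ V, ∑ v, F V v ≤ #V * (1 + γ)) :
    ∃ V : M → Finset ι, IsSpread (p / 4) (4 * p) ε s V ∧ (∀ m, p / 4 * N ≤ #(V m)) ∧
      (∀ m, #(V m) ≤ 4 * (p * N)) ∧
      ∀ m m', m ≠ m' → ∑ v ∈ V m, F (V m') v ≤ ε * (p * N) := by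
  have hμ := isPMF_bernoulliFamily (M := M) (ι := ι) h.density_pos.le h.density_le_one
  have hbad := probOf_or_lt_add hμ (probOf_exists_small_inter_lt_one_fifth h) <|
    probOf_or_lt_add hμ (probOf_exists_large_multiplicity_lt_one_fifth h) <|
    probOf_or_lt_add hμ (probOf_exists_small_card_lt_one_fifth h) <|
    probOf_or_lt_add hμ (probOf_exists_large_card_lt_one_fifth h) <|
    probOf_exists_interference_lt_one_fifth h hF0 hF1 hF
  obtain ⟨V, hV⟩ := exists_not_of_probOf_lt_one hμ (hbad.trans_eq (by norm_num))
  push Not at hV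
  obtain ⟨hinter, hmem, hlow, hupp, hF⟩ := hV
  exact ⟨V, ⟨hinter, hmem⟩, hlow, hupp, fun m m' hm => hF (m, m') hm (hupp m')⟩

end SpreadFamily

section Selection

/-- A family `V` of subsets of `ι`, one for each message, with a cost `f m m'` on `ι` for every
ordered pair of messages: the family is spread, its members have size at least `p / 4` times that
of `ι`, and the average costs over `V m` are of order at most `ε`. The costs of identification
codes are error probabilities, `f m m` being that of a missed identification of `m`. -/
structure IsSpreadCode {ι M : Type*} [Fintype ι] [Fintype M] (p ε s : ℝ) (V : M → Finset ι)
    (f : M → M → ι → ℝ) : Prop where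
  isSpread : IsSpread (p / 4) (4 * p) ε s V
  le_card : ∀ m, p / 4 * Fintype.card ι ≤ #(V m)
  cost_nonneg : ∀ m m' v, 0 ≤ f m m' v
  cost_le_one : ∀ m m' v, f m m' v ≤ 1
  sum_cost_le : ∀ m m', ∑ v ∈ V m, f m m' v ≤ ε * (p * Fintype.card ι)

/-- Uniform weights on `S` if `S` has at least `s` elements, and on the whole type otherwise. -/
def selectionWeight {ι : Type*} [Fintype ι] (s : ℝ) (S : Finset ι) (v : ι) : ℝ :=
  if s ≤ #S then if v ∈ S then (#S : ℝ)⁻¹ else 0 else (Fintype.card ι : ℝ)⁻¹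

variable {ι I A B C M Q : Type*} [Fintype ι] {s : ℝ}

lemma isPMF_selectionWeight [Nonempty ι] (hs : 0 < s) (S : Finset ι) :
    IsPMF (selectionWeight s S) := by
  refine ⟨fun v => ?_, ?_⟩
  · rw [selectionWeight]
    split_ifs <;> positivity
  · by_cases h : s ≤ #S
    · have hS : (#S : ℝ) ≠ 0 := (hs.trans_le h).ne'
      simp only [selectionWeight, if_pos h, sum_ite_mem, univ_inter, sum_const, nsmul_eq_mul,
        mul_inv_cancel₀ hS]
    · have hι : (Fintype.card ι : ℝ) ≠ 0 := Nat.cast_ne_zero.2 Fintype.card_ne_zero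
      simp only [selectionWeight, if_neg h, sum_const, card_univ, nsmul_eq_mul, mul_inv_cancel₀ hι]

lemma expectation_selectionWeight_le [Nonempty ι] (hs : 0 < s) (S : Finset ι) {g : ι → ℝ}
    (h0 : ∀ v, 0 ≤ g v) (h1 : ∀ v, g v ≤ 1) :
    expectation (selectionWeight s S) g ≤
      (if (#S : ℝ) < s then 1 else 0) + s⁻¹ * ∑ v ∈ S, g v := by
  have hS : 0 ≤ ∑ v ∈ S, g v := sum_nonneg fun v _ => h0 v
  by_cases h : s ≤ #S
  · rw [if_neg (not_lt.2 h), zero_add]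
    simp only [expectation, selectionWeight, if_pos h, ite_mul, zero_mul, sum_ite_mem, univ_inter,
      ← mul_sum]
    gcongr
  · rw [if_pos (not_le.1 h)]
    have hle := expectation_le_of_forall_le (isPMF_selectionWeight hs S) h1
    have : 0 ≤ s⁻¹ * ∑ v ∈ S, g v := by positivity
    linarith

variable [Fintype Q]

lemma IsSpread.sum_expectation_selectionWeight_le [Nonempty ι] {a b ε : ℝ} {U : Q → Finset ι}
    (hU : IsSpread a b ε s U) (hs : 0 < s) {S : Finset ι} (hS : s ≤ a * #S) {g : ι → ℝ}
    (h0 : ∀ v, 0 ≤ g v) (h1 : ∀ v, g v ≤ 1) :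
    ∑ q, expectation (selectionWeight s (S ∩ U q)) g ≤
      (ε + s⁻¹ * (∑ v ∈ S, g v) * b) * Fintype.card Q := by
  have hsmall : (#{q | (#(S ∩ U q) : ℝ) < s} : ℝ) ≤ ε * Fintype.card Q :=
    (Nat.cast_le.2 (card_le_card (monotone_filter_right _ fun _ _ h => h.trans_le hS))).trans
      (hU.card_small_inter_le S hS)
  calc ∑ q, expectation (selectionWeight s (S ∩ U q)) g
      ≤ ∑ q, ((if (#(S ∩ U q) : ℝ) < s then 1 else 0) + s⁻¹ * ∑ v ∈ S ∩ U q, g v) :=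
        sum_le_sum fun q _ => expectation_selectionWeight_le hs _ h0 h1
    _ = #{q | (#(S ∩ U q) : ℝ) < s} + s⁻¹ * ∑ q, ∑ v ∈ S ∩ U q, g v := by
        rw [sum_add_distrib, sum_boole, mul_sum]
    _ ≤ ε * Fintype.card Q + s⁻¹ * ((∑ v ∈ S, g v) * (b * Fintype.card Q)) := by
        gcongr
        exact hU.sum_sum_inter_le S h0
    _ = (ε + s⁻¹ * (∑ v ∈ S, g v) * b) * Fintype.card Q := by ring

variable [Fintype I] [DecidableEq I] [Fintype A] [Fintype B] [Fintype C] [Fintype M]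

lemma probOf_exists_lt_sum_lt_one_fifth {w : I → ι → ℝ} (hw : ∀ i, IsPMF (w i)) {φ : M → Q → I}
    (hφ : ∀ m, (φ m).Injective) {f : M → M → ι → ℝ} (h0 : ∀ m m' v, 0 ≤ f m m' v)
    (h1 : ∀ m m' v, f m m' v ≤ 1) {t : ℝ}
    (hmean : ∀ m m', ∑ q, expectation (w (φ m q)) (f m m') ≤ t / 4)
    (ht : 2 * Real.log (Fintype.card M) + 3 ≤ t / 2) :
    probOf (prodWeight w) (fun x => ∃ m : M × M, t < ∑ q, f m.1 m.2 (x (φ m.1 q))) < 1 / 5 := by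
  refine (probOf_exists_le (isPMF_prodWeight hw) _ fun m : M × M =>
    probOf_prodWeight_lt_sum_le hw (hφ m.1) (fun _ => h0 m.1 m.2) (fun _ => h1 m.1 m.2)
      (hmean m.1 m.2)).trans_lt (mul_exp_neg_lt_one_fifth ?_)
  rwa [Fintype.card_prod, Nat.cast_mul, ← sq, Real.log_pow, Nat.cast_ofNat]

variable {pA pB pC ε : ℝ} {VA : A → Finset ι} {VB : B → Finset ι} {VC : C → Finset ι}

lemma IsSpreadCode.sum_expectation_cost_le [Nonempty ι] {fA : A → A → ι → ℝ}
    (hA : IsSpreadCode pA ε s VA fA)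
    (hB : IsSpread (pB / 4) (4 * pB) ε s VB) (hC : IsSpread (pC / 4) (4 * pC) ε s VC)
    (hpB : 0 ≤ pB) (hpC : 0 ≤ pC) (hpC1 : pC ≤ 1) (hε : 0 ≤ ε)
    (hs : 0 < s) (hsp : s = Fintype.card ι * (pA * pB * pC) / 64) (a a' : A) :
    ∑ q : B × C, expectation (selectionWeight s (VA a ∩ (VB q.1 ∩ VC q.2))) (fA a a') ≤
      4104 * ε * Fintype.card (B × C) / 4 := by
  have hBC := hB.inter hC (by positivity) (by positivity) (by linarith) (by positivity) hε
  have hcard : s ≤ pB / 4 * (pC / 4) * #(VA a) :=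
    calc s = pB / 4 * (pC / 4) * (pA / 4 * Fintype.card ι) := by rw [hsp]; ring
      _ ≤ pB / 4 * (pC / 4) * #(VA a) := by
        gcongr
        exact hA.le_card a
  calc ∑ q : B × C, expectation (selectionWeight s (VA a ∩ (VB q.1 ∩ VC q.2))) (fA a a')
      ≤ (ε + ε + s⁻¹ * (∑ v ∈ VA a, fA a a' v) * (4 * pB * (4 * pC))) * Fintype.card (B × C) :=
        hBC.sum_expectation_selectionWeight_le hs hcard (hA.cost_nonneg a a') (hA.cost_le_one a a')
    _ ≤ (ε + ε + s⁻¹ * (ε * (pA * Fintype.card ι)) * (4 * pB * (4 * pC))) *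
          Fintype.card (B × C) := by
        gcongr
        exact hA.sum_cost_le a a'
    _ = (ε + ε + 1024 * ε * (s⁻¹ * (Fintype.card ι * (pA * pB * pC) / 64))) *
          Fintype.card (B × C) := by ring
    _ = 4104 * ε * Fintype.card (B × C) / 4 := by
        rw [← hsp, inv_mul_cancel₀ hs.ne']
        ring

lemma IsSpreadCode.probOf_exists_lt_sum_cost_lt_one_fifth [Nonempty ι] {fA : A → A → ι → ℝ}
    (hA : IsSpreadCode pA ε s VA fA) (hB : IsSpread (pB / 4) (4 * pB) ε s VB)
    (hC : IsSpread (pC / 4) (4 * pC) ε s VC) {γA δA γB δB γC δC : ℝ}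
    (hadA : IsAdmissible (Fintype.card ι) (Fintype.card A) pA ε s γA δA)
    (hadB : IsAdmissible (Fintype.card ι) (Fintype.card B) pB ε s γB δB)
    (hadC : IsAdmissible (Fintype.card ι) (Fintype.card C) pC ε s γC δC)
    (hs : 0 < s) (hsp : s = Fintype.card ι * (pA * pB * pC) / 64) {S : I → Finset ι}
    {φ : A → B × C → I} (hφ : ∀ a, (φ a).Injective)
    (hS : ∀ a q, S (φ a q) = VA a ∩ (VB q.1 ∩ VC q.2)) :
    probOf (prodWeight fun i => selectionWeight s (S i)) (fun x => ∃ a : A × A,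
      4104 * ε * Fintype.card (B × C) < ∑ q, fA a.1 a.2 (x (φ a.1 q))) < 1 / 5 := by
  refine probOf_exists_lt_sum_lt_one_fifth (fun i => isPMF_selectionWeight hs (S i)) hφ
    hA.cost_nonneg hA.cost_le_one (fun a a' => ?_) ?_
  · simp only [hS]
    exact hA.sum_expectation_cost_le hB hC hadB.density_pos.le hadC.density_pos.le
      hadC.density_le_one hadA.level_pos.le hs hsp a a'
  · have hB1 : 2 * ((Fintype.card ι : ℝ) + 3) ≤ ε * Fintype.card B :=
      hadB.ground_le.trans (mul_le_mul_of_nonneg_right hadB.density_le_level (Nat.cast_nonneg _))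
    have hC1 : 1 ≤ (Fintype.card C : ℝ) := by
      nlinarith [hadC.ground_le, hadC.density_le_one, Nat.cast_nonneg (α := ℝ) (Fintype.card C),
        Nat.cast_nonneg (α := ℝ) (Fintype.card ι)]
    have hA1 : 4 * (Real.log (Fintype.card A) + 3) ≤ Fintype.card ι :=
      (hadA.log_card_le_ground (Nat.cast_nonneg _)).trans
        (mul_le_of_le_one_left (Nat.cast_nonneg _) hadA.density_le_one)
    have hBC : ε * Fintype.card B ≤ ε * Fintype.card B * Fintype.card C :=
      le_mul_of_one_le_right (mul_nonneg hadA.level_pos.le (Nat.cast_nonneg _)) hC1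
    rw [Fintype.card_prod, Nat.cast_mul]
    linarith [hBC, hA1, hB1, Nat.cast_nonneg (α := ℝ) (Fintype.card ι)]

lemma exists_selection {fA : A → A → ι → ℝ} {fB : B → B → ι → ℝ} {fC : C → C → ι → ℝ}
    {γA δA γB δB γC δC : ℝ}
    (hadA : IsAdmissible (Fintype.card ι) (Fintype.card A) pA ε s γA δA)
    (hadB : IsAdmissible (Fintype.card ι) (Fintype.card B) pB ε s γB δB)
    (hadC : IsAdmissible (Fintype.card ι) (Fintype.card C) pC ε s γC δC)
    (hA : IsSpreadCode pA ε s VA fA) (hB : IsSpreadCode pB ε s VB fB)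
    (hC : IsSpreadCode pC ε s VC fC) [Nonempty ι]
    (hsp : s = Fintype.card ι * (pA * pB * pC) / 64) :
    ∃ x : A → B → C → ι,
      (∀ a a', ∑ q : B × C, fA a a' (x a q.1 q.2) ≤ 4104 * ε * Fintype.card (B × C)) ∧
      (∀ b b', ∑ q : A × C, fB b b' (x q.1 b q.2) ≤ 4104 * ε * Fintype.card (A × C)) ∧
      (∀ c c', ∑ q : A × B, fC c c' (x q.1 q.2 c) ≤ 4104 * ε * Fintype.card (A × B)) := by
  have hs : 0 < s := by
    have := hadA.density_pos
    have := hadB.density_pos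
    have := hadC.density_pos
    rw [hsp]
    positivity
  let S : A × B × C → Finset ι := fun m => VA m.1 ∩ (VB m.2.1 ∩ VC m.2.2)
  have hμ := isPMF_prodWeight fun m => isPMF_selectionWeight hs (S m)
  have hbadA := hA.probOf_exists_lt_sum_cost_lt_one_fifth hB.isSpread hC.isSpread hadA hadB hadC
    hs hsp (S := S) (φ := fun a q => (a, q.1, q.2)) Prod.mk_right_injective fun a q => rfl
  have hB_inj : ∀ b : B, Function.Injective fun q : A × C => (q.1, b, q.2) := by
    rintro b ⟨a, c⟩ ⟨a', c'⟩ h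
    simp_all only [Prod.mk.injEq, true_and]
  have hC_inj : ∀ c : C, Function.Injective fun q : A × B => (q.1, q.2, c) := by
    rintro c ⟨a, b⟩ ⟨a', b'⟩ h
    simp_all only [Prod.mk.injEq, and_true]
  have hbadB := hB.probOf_exists_lt_sum_cost_lt_one_fifth hA.isSpread hC.isSpread hadB hadA hadC
    hs (by rw [hsp]; ring) (S := S) hB_inj fun b q => inter_left_comm _ _ _
  have hbadC := hC.probOf_exists_lt_sum_cost_lt_one_fifth hA.isSpread hB.isSpread hadC hadA hadB
    hs (by rw [hsp]; ring) (S := S) hC_inj fun c q => by rw [inter_comm (VC c), inter_assoc]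
  obtain ⟨x, hx⟩ := exists_not_of_probOf_lt_one hμ
    ((probOf_or_lt_add hμ hbadA (probOf_or_lt_add hμ hbadB hbadC)).trans (by norm_num))
  push Not at hx
  obtain ⟨hxA, hxB, hxC⟩ := hx
  exact ⟨fun a b c => x (a, b, c), fun a a' => hxA (a, a'), fun b b' => hxB (b, b'),
    fun c c' => hxC (c, c')⟩

end Selection

section Cramer

variable {Ω : Type*} [Fintype Ω] {μ F : Ω → ℝ}

/-- The moment generating function of `-F` has derivative `-expectation μ F` at `0`. -/
lemma exists_expectation_exp_neg_lt_one (hμ : IsPMF μ) (hF : 0 < expectation μ F) :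
    ∃ θ > 0, expectation μ (fun ω => Real.exp (-(θ * F ω))) < 1 := by
  set g : ℝ → ℝ := fun θ => expectation μ fun ω => Real.exp (-(θ * F ω))
  have hg0 : g 0 = 1 := by
    simp only [g, zero_mul, neg_zero, Real.exp_zero, expectation_const hμ]
  have hderiv : HasDerivAt g (-expectation μ F) 0 := by
    have hterm : ∀ ω ∈ univ, HasDerivAt (fun θ => μ ω * Real.exp (-(θ * F ω))) (μ ω * -F ω) 0 :=
      fun ω _ => by
        simpa using (((hasDerivAt_id (0 : ℝ)).mul_const (F ω)).fun_neg.exp).const_mul (μ ω)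
    have hsum : -expectation μ F = ∑ ω, μ ω * -F ω := by
      simp only [expectation, mul_neg, sum_neg_distrib]
    rw [hsum]
    exact HasDerivAt.fun_sum hterm
  have hslope := (hasDerivAt_iff_tendsto_slope.1 hderiv).mono_left
    (nhdsWithin_mono (0 : ℝ) fun θ (hθ : θ ∈ Set.Ioi 0) => ne_of_gt hθ)
  obtain ⟨θ, hlt, hθ⟩ := ((hslope.eventually_lt_const (neg_lt_zero.2 hF)).and
    self_mem_nhdsWithin).exists
  refine ⟨θ, hθ, ?_⟩
  rw [slope_def_field, hg0, sub_zero, div_lt_iff₀ hθ, zero_mul] at hlt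
  exact sub_neg.1 hlt

lemma exists_probOf_sum_nonpos_le (hμ : IsPMF μ) (hF : 0 < expectation μ F) :
    ∃ c > 0, ∀ n : ℕ, probOf (prodWeight fun _ : Fin n => μ) (fun ω => ∑ i, F (ω i) ≤ 0) ≤
      Real.exp (-(n * c)) := by
  obtain ⟨θ, hθ, hlt⟩ := exists_expectation_exp_neg_lt_one hμ hF
  set δ := expectation μ fun ω => Real.exp (-(θ * F ω))
  have hδ : 0 ≤ δ := expectation_nonneg hμ fun ω => (Real.exp_pos _).le
  refine ⟨1 - δ, sub_pos.2 hlt, fun n => ?_⟩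
  calc probOf (prodWeight fun _ : Fin n => μ) (fun ω => ∑ i, F (ω i) ≤ 0)
      ≤ expectation (prodWeight fun _ : Fin n => μ) fun ω => Real.exp (∑ i, -(θ * F (ω i))) :=
        probOf_le_expectation_exp (isPMF_prodWeight fun _ => hμ) fun ω hω => by
          rw [sum_neg_distrib, ← mul_sum, neg_nonneg]
          exact mul_nonpos_of_nonneg_of_nonpos hθ.le hω
    _ = δ ^ n := by
        simp only [Real.exp_sum]
        rw [expectation_prodWeight_prod _ fun _ ω => Real.exp (-(θ * F ω)), prod_const, card_univ,
          Fintype.card_fin]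
    _ ≤ Real.exp (-(1 - δ)) ^ n :=
        pow_le_pow_left₀ hδ (by linarith [Real.add_one_le_exp (-(1 - δ))]) n
    _ = Real.exp (-(n * (1 - δ))) := by rw [← Real.exp_nat_mul, mul_neg]

end Cramer

section Channel

/-- The probability that the output of the memoryless extension of `W` lies in `D` when the
sequence `x` is sent. -/
def outputProb {X Y : Type*} (W : X → Y → ℝ) {n : ℕ} (x : Fin n → X) (D : Finset (Fin n → Y)) :
    ℝ :=
  ∑ y ∈ D, Wn W n x y

/-- The output distribution of the channel `W` for the input distribution `P`. -/
def outputWeight {X Y : Type*} [Fintype X] (P : X → ℝ) (W : X → Y → ℝ) (y : Y) : ℝ :=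
  ∑ x, P x * W x y

/-- The joint law of input and output of the channel `W` for the input distribution `P`. -/
def jointWeight {X Y : Type*} (P : X → ℝ) (W : X → Y → ℝ) (z : X × Y) : ℝ := P z.1 * W z.1 z.2

/-- The information density, whose expectation under the joint law of input and output is the
mutual information. It has junk values at pairs of probability zero. -/
def infoDensity {X Y : Type*} [Fintype X] (P : X → ℝ) (W : X → Y → ℝ) (z : X × Y) : ℝ :=
  Real.log (W z.1 z.2 / outputWeight P W z.2)

variable {X Y : Type*} [Fintype Y] {P : X → ℝ} {W : X → Y → ℝ} {n : ℕ}

lemma isPMF_Wn (hW : IsChannel W) (x : Fin n → X) : IsPMF (Wn W n x) :=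
  isPMF_prodWeight fun i => ⟨hW.1 (x i), hW.2 (x i)⟩

lemma outputProb_nonneg (hW : IsChannel W) (x : Fin n → X) (D : Finset (Fin n → Y)) :
    0 ≤ outputProb W x D :=
  sum_nonneg fun y _ => (isPMF_Wn hW x).1 y

lemma outputProb_mono (hW : IsChannel W) (x : Fin n → X) {D D' : Finset (Fin n → Y)}
    (h : D ⊆ D') : outputProb W x D ≤ outputProb W x D' :=
  sum_le_sum_of_subset_of_nonneg h fun y _ _ => (isPMF_Wn hW x).1 y

lemma outputProb_le_one (hW : IsChannel W) (x : Fin n → X) (D : Finset (Fin n → Y)) :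
    outputProb W x D ≤ 1 :=
  (outputProb_mono hW x (subset_univ D)).trans_eq (isPMF_Wn hW x).2

lemma outputProb_biUnion_le {J : Type*} (hW : IsChannel W) (x : Fin n → X) (V : Finset J)
    (D : J → Finset (Fin n → Y)) :
    outputProb W x (V.biUnion D) ≤ ∑ j ∈ V, outputProb W x (D j) := by
  induction V using Finset.induction_on with
  | empty => simp only [biUnion_empty, outputProb, sum_empty, le_refl]
  | insert j V hj ih =>
    rw [sum_insert hj, biUnion_insert]
    calc outputProb W x (D j ∪ V.biUnion D)
        ≤ outputProb W x (D j) + outputProb W x (V.biUnion D) := by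
          rw [outputProb, outputProb, outputProb, ← sum_union_inter]
          exact le_add_of_nonneg_right (outputProb_nonneg hW x _)
      _ ≤ outputProb W x (D j) + ∑ j ∈ V, outputProb W x (D j) := by gcongr

variable [Fintype X]

lemma isPMF_jointWeight (hP : IsPMF P) (hW : IsChannel W) : IsPMF (jointWeight P W) := by
  refine ⟨fun z => mul_nonneg (hP.1 _) (hW.1 _ _), ?_⟩
  simp only [jointWeight, Fintype.sum_prod_type, ← mul_sum, hW.2, mul_one, hP.2]

lemma expectation_infoDensity (P : X → ℝ) (W : X → Y → ℝ) :
    expectation (jointWeight P W) (infoDensity P W) = mutInf P W := by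
  simp only [expectation, Fintype.sum_prod_type, mutInf, jointWeight, infoDensity, outputWeight]
  refine sum_congr rfl fun x _ => sum_congr rfl fun y _ => ?_
  split_ifs with h
  · rw [h, zero_mul]
  · rfl

/-- The outputs whose likelihood under the input `x` exceeds their likelihood under the output
distribution of `P` by a factor greater than `exp (n * I)`. -/
def likelySet (P : X → ℝ) (W : X → Y → ℝ) (I : ℝ) (x : Fin n → X) : Finset (Fin n → Y) :=
  {y | Real.exp (n * I) * ∏ i, outputWeight P W (y i) < Wn W n x y}

lemma expectation_outputProb_likelySet_le (hW : IsChannel W) (I : ℝ) (x : Fin n → X) :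
    expectation (prodWeight fun _ : Fin n => P) (fun z => outputProb W z (likelySet P W I x)) ≤
      Real.exp (-(n * I)) := by
  have houtput : ∀ y : Fin n → Y, expectation (prodWeight fun _ : Fin n => P)
      (fun z => Wn W n z y) = ∏ i, outputWeight P W (y i) := fun y =>
    expectation_prodWeight_prod (fun _ => P) fun i b => W b (y i)
  simp only [outputProb]
  rw [expectation_sum, Real.exp_neg, ← one_div, le_div_iff₀' (Real.exp_pos _), mul_sum]
  refine (sum_le_sum fun y hy => ?_).trans (outputProb_le_one hW x (likelySet P W I x))
  rw [houtput]
  exact (mem_filter.1 hy).2.le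

lemma sum_infoDensity_sub_nonpos (hP : IsPMF P) (hW : IsChannel W) {I : ℝ} {z : Fin n → X × Y}
    (hz : 0 < prodWeight (fun _ => jointWeight P W) z)
    (hmem : (fun i => (z i).2) ∉ likelySet P W I fun i => (z i).1) :
    ∑ i, (infoDensity P W (z i) - I) ≤ 0 := by
  have hjoint : ∀ i, 0 < jointWeight P W (z i) := fun i =>
    ((isPMF_jointWeight hP hW).1 (z i)).lt_of_ne' fun h => hz.ne' (prod_eq_zero (mem_univ i) h)
  have hWpos : ∀ i, 0 < W (z i).1 (z i).2 := fun i => pos_of_mul_pos_right (hjoint i) (hP.1 _)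
  have hout : ∀ i, 0 < outputWeight P W (z i).2 := fun i =>
    (hjoint i).trans_le (single_le_sum (f := fun x => P x * W x (z i).2)
      (fun x _ => mul_nonneg (hP.1 x) (hW.1 x _)) (mem_univ (z i).1))
  simp only [likelySet, mem_filter, mem_univ, true_and, not_lt, Wn] at hmem
  simp only [infoDensity]
  rw [sum_sub_distrib, ← Real.log_prod fun i _ => (div_pos (hWpos i) (hout i)).ne',
    prod_div_distrib, sum_const, card_univ, Fintype.card_fin, nsmul_eq_mul, sub_nonpos,
    Real.log_le_iff_le_exp (div_pos (prod_pos fun i _ => hWpos i) (prod_pos fun i _ => hout i)),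
    div_le_iff₀ (prod_pos fun i _ => hout i)]
  exact hmem

lemma expectation_outputProb_compl_likelySet (P : X → ℝ) (W : X → Y → ℝ) (I : ℝ) (n : ℕ) :
    expectation (prodWeight fun _ : Fin n => P) (fun x => outputProb W x (likelySet P W I x)ᶜ) =
      probOf (prodWeight fun _ : Fin n => jointWeight P W)
        (fun z => (fun i => (z i).2) ∉ likelySet P W I fun i => (z i).1) := by
  simp only [probOf, expectation, outputProb]
  rw [Fintype.sum_equiv (Equiv.arrowProdEquivProdArrow (Fin n) (fun _ => X) fun _ => Y) _
    (fun z => prodWeight (fun _ => P) z.1 * Wn W n z.1 z.2 *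
      if z.2 ∉ likelySet P W I z.1 then 1 else 0) fun z => ?_]
  · rw [Fintype.sum_prod_type]
    refine sum_congr rfl fun x _ => ?_
    simp only [← mul_sum, mul_ite, mul_one, mul_zero, ← sum_filter]
    congr 2
    ext y
    simp only [mem_compl, mem_filter, mem_univ, true_and]
  · simp only [prodWeight, jointWeight, Wn, prod_mul_distrib, Equiv.arrowProdEquivProdArrow,
      Equiv.coe_fn_mk]
    congr

lemma exists_expectation_outputProb_compl_likelySet_le (hP : IsPMF P) (hW : IsChannel W) {I : ℝ}
    (hI : I < mutInf P W) :
    ∃ c > 0, ∀ n : ℕ, expectation (prodWeight fun _ : Fin n => P)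
      (fun x => outputProb W x (likelySet P W I x)ᶜ) ≤ Real.exp (-(n * c)) := by
  have hμ := isPMF_jointWeight hP hW
  have hmean : 0 < expectation (jointWeight P W) fun z => infoDensity P W z + -I := by
    rw [expectation_add, expectation_infoDensity, expectation_const hμ]
    linarith
  obtain ⟨c, hc, htail⟩ := exists_probOf_sum_nonpos_le hμ hmean
  refine ⟨c, hc, fun n => ?_⟩
  rw [expectation_outputProb_compl_likelySet]
  exact (probOf_mono_of_pos (isPMF_prodWeight fun _ => hμ) fun z hz hmem =>
    sum_infoDensity_sub_nonpos hP hW hz hmem).trans (htail n)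

end Channel

section Expurgation

variable {ι K Z : Type*} [Fintype ι] [Fintype K] [Fintype Z] {μ : Z → ℝ}

lemma exists_sum_add_sum_erase_le {J : Type*} [Fintype J] [DecidableEq J] (hμ : IsPMF μ)
    {e : Z → ℝ} {G : Z → Z → ℝ} {δ β : ℝ} (hβ : 0 ≤ β) (he : expectation μ e ≤ δ)
    (hG : ∀ z, expectation μ (G z) ≤ β) :
    ∃ u : J → Z, ∑ j, (e (u j) + ∑ j' ∈ univ.erase j, G (u j) (u j')) ≤
      Fintype.card J * (δ + Fintype.card J * β) := by
  have hw : ∀ _ : J, IsPMF μ := fun _ => hμ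
  have hmean : ∀ j, expectation (prodWeight fun _ : J => μ)
      (fun u => e (u j) + ∑ j' ∈ univ.erase j, G (u j) (u j')) ≤ δ + Fintype.card J * β := by
    intro j
    rw [expectation_add, expectation_sum]
    refine add_le_add (expectation_prodWeight_le_of_update hw j fun u => ?_) ?_
    · simpa only [Function.update_self] using he
    · calc ∑ j' ∈ univ.erase j, expectation (prodWeight fun _ : J => μ) (fun u => G (u j) (u j'))
          ≤ ∑ _j' ∈ univ.erase j, β := sum_le_sum fun j' hj' =>
            expectation_prodWeight_le_of_update hw j' fun u => by
              simpa only [Function.update_self,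
                Function.update_of_ne (ne_of_mem_erase hj').symm] using hG (u j)
        _ ≤ ∑ _j' : J, β := sum_le_univ_sum_of_nonneg fun _ => hβ
        _ = Fintype.card J * β := by rw [sum_const, card_univ, nsmul_eq_mul]
  obtain ⟨u, hu⟩ := exists_le_expectation (isPMF_prodWeight hw)
    (F := fun u => ∑ j, (e (u j) + ∑ j' ∈ univ.erase j, G (u j) (u j')))
  refine ⟨u, hu.trans ?_⟩
  rw [expectation_sum, ← nsmul_eq_mul, ← card_univ]
  exact sum_le_card_nsmul _ _ _ fun j _ => hmean j

lemma exists_embedding_le_two_mul {Φ : ι ⊕ ι → ℝ} {c : ℝ} (hc : 0 ≤ c) (h0 : ∀ j, 0 ≤ Φ j)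
    (h : ∑ j, Φ j ≤ Fintype.card (ι ⊕ ι) * c) : ∃ f : ι ↪ ι ⊕ ι, ∀ i, Φ (f i) ≤ 2 * c := by
  have hcard : Fintype.card ι ≤ Fintype.card {j // Φ j ≤ 2 * c} := by
    rw [Fintype.card_subtype]
    by_contra! hlt
    have hsplit := card_filter_add_card_filter_not (s := (univ : Finset (ι ⊕ ι))) (Φ · ≤ 2 * c)
    rw [card_univ, Fintype.card_sum] at hsplit
    have hbad : Fintype.card ι < #{j | ¬ Φ j ≤ 2 * c} := by omega
    have hsum : ∑ j with ¬ Φ j ≤ 2 * c, 2 * c < ∑ j, Φ j :=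
      (sum_lt_sum_of_nonempty (card_pos.1 (by omega)) fun j hj =>
        not_le.1 (mem_filter.1 hj).2).trans_le (sum_le_univ_sum_of_nonneg h0)
    rw [sum_const, nsmul_eq_mul] at hsum
    have hle : (Fintype.card ι : ℝ) * (2 * c) ≤ #{j | ¬ Φ j ≤ 2 * c} * (2 * c) := by
      gcongr
    rw [Fintype.card_sum, Nat.cast_add] at h
    linarith
  obtain ⟨f⟩ := Function.Embedding.nonempty_of_card_le hcard
  exact ⟨f.trans (Function.Embedding.subtype _), fun i => (f i).2⟩

lemma exists_add_sum_erase_le (hμ : IsPMF μ) {e : Z → ℝ} {G : Z → Z → ℝ} {δ β : ℝ}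
    (he0 : ∀ z, 0 ≤ e z) (hG0 : ∀ z z', 0 ≤ G z z') (hδ : 0 ≤ δ) (hβ : 0 ≤ β)
    (he : expectation μ e ≤ δ) (hG : ∀ z, expectation μ (G z) ≤ β) :
    ∃ u : ι → Z, ∀ v, e (u v) + ∑ v' ∈ univ.erase v, G (u v) (u v') ≤
      2 * (δ + 2 * Fintype.card ι * β) := by
  obtain ⟨u, hu⟩ := exists_sum_add_sum_erase_le (J := ι ⊕ ι) hμ hβ he hG
  obtain ⟨f, hf⟩ := exists_embedding_le_two_mul (by positivity)
    (fun j => add_nonneg (he0 _) (sum_nonneg fun j' _ => hG0 (u j) (u j'))) hu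
  refine ⟨fun v => u (f v), fun v => le_trans ?_ ((hf v).trans_eq ?_)⟩
  · rw [← sum_map (univ.erase v) f fun j => G (u (f v)) (u j)]
    refine add_le_add le_rfl (sum_le_sum_of_subset_of_nonneg (fun j hj => ?_) fun _ _ _ => hG0 _ _)
    obtain ⟨v', hv', rfl⟩ := mem_map.1 hj
    exact mem_erase.2 ⟨f.injective.ne (ne_of_mem_erase hv'), mem_univ _⟩
  · rw [Fintype.card_sum, Nat.cast_add]
    ring

lemma exists_forall_le_and_sum_erase_le (hμ : IsPMF μ) {e : K → Z → ℝ} {G : K → Z → Z → ℝ}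
    {δ β : K → ℝ} (hδ : ∀ k, 0 < δ k) (hβ : ∀ k, 0 < β k) (he0 : ∀ k z, 0 ≤ e k z)
    (hG0 : ∀ k z z', 0 ≤ G k z z') (he : ∀ k, expectation μ (e k) ≤ δ k)
    (hG : ∀ k z, expectation μ (G k z) ≤ β k) :
    ∃ u : ι → Z, ∀ k v, e k (u v) ≤ 4 * Fintype.card K * δ k ∧
      ∑ v' ∈ univ.erase v, G k (u v) (u v') ≤ 8 * Fintype.card K * Fintype.card ι * β k := by
  have hsum : ∀ {a : K → ℝ} {F : K → Z → ℝ}, (∀ k, 0 < a k) →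
      (∀ k, expectation μ (F k) ≤ a k) →
      expectation μ (fun z => ∑ k, (a k)⁻¹ * F k z) ≤ Fintype.card K := fun ha hF => by
    rw [expectation_sum, ← nsmul_one, ← card_univ]
    refine sum_le_card_nsmul _ _ _ fun k _ => ?_
    rw [expectation_const_mul, inv_mul_le_one₀ (ha k)]
    exact hF k
  have he' : ∀ k z, 0 ≤ (δ k)⁻¹ * e k z := fun k z =>
    mul_nonneg (inv_nonneg.2 (hδ k).le) (he0 k z)
  have hG' : ∀ k z z', 0 ≤ (β k)⁻¹ * G k z z' := fun k z z' =>
    mul_nonneg (inv_nonneg.2 (hβ k).le) (hG0 k z z')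
  obtain ⟨u, hu⟩ := exists_add_sum_erase_le (ι := ι) hμ
    (e := fun z => 2 * Fintype.card ι * ∑ k, (δ k)⁻¹ * e k z)
    (G := fun z z' => ∑ k, (β k)⁻¹ * G k z z') (δ := 2 * Fintype.card ι * Fintype.card K)
    (fun z => mul_nonneg (by positivity) (sum_nonneg fun k _ => he' k z))
    (fun z z' => sum_nonneg fun k _ => hG' k z z') (by positivity) (by positivity)
    (by
      rw [expectation_const_mul]
      exact mul_le_mul_of_nonneg_left (hsum hδ he) (by positivity))
    (fun z => hsum hβ fun k => hG k z)
  refine ⟨u, fun k v => ?_⟩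
  have hι : 0 < (Fintype.card ι : ℝ) := Nat.cast_pos.2 (Fintype.card_pos_iff.2 ⟨v⟩)
  have hek : (δ k)⁻¹ * e k (u v) ≤ ∑ k, (δ k)⁻¹ * e k (u v) :=
    single_le_sum (f := fun k => (δ k)⁻¹ * e k (u v)) (fun k _ => he' k _) (mem_univ k)
  have hGk : (β k)⁻¹ * ∑ v' ∈ univ.erase v, G k (u v) (u v') ≤
      ∑ v' ∈ univ.erase v, ∑ k, (β k)⁻¹ * G k (u v) (u v') := by
    rw [mul_sum]
    exact sum_le_sum fun v' _ => single_le_sum (f := fun k => (β k)⁻¹ * G k (u v) (u v'))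
      (fun k _ => hG' k _ _) (mem_univ k)
  have hek0 := he' k (u v)
  have hGk0 : 0 ≤ (β k)⁻¹ * ∑ v' ∈ univ.erase v, G k (u v) (u v') :=
    mul_nonneg (inv_nonneg.2 (hβ k).le) (sum_nonneg fun v' _ => hG0 k _ _)
  have hek2 := mul_le_mul_of_nonneg_left hek (by positivity : 0 ≤ 2 * (Fintype.card ι : ℝ))
  have huv := hu v
  constructor
  · rw [mul_comm _ (δ k), ← inv_mul_le_iff₀ (hδ k)]
    nlinarith
  · rw [mul_comm _ (β k), ← inv_mul_le_iff₀ (hβ k)]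
    nlinarith

end Expurgation

section ReliablePool

/-- The list `u` of input sequences, each point `v` of which has the decoding set `T v`, can be
transmitted reliably: the output of a listed sequence misses its own decoding set with probability
at most `δ`, and the probabilities with which the other listed sequences hit a given decoding set
have sum at most `γ`. -/
structure IsReliablePool {X Y ι : Type*} [Fintype Y] [Fintype ι] (W : X → Y → ℝ) {n : ℕ}
    (u : ι → Fin n → X) (T : ι → Finset (Fin n → Y)) (δ γ : ℝ) : Prop where
  miss_le : ∀ v, outputProb W (u v) (T v)ᶜ ≤ δ
  sum_hit_le : ∀ v, ∑ v' ∈ univ.erase v, outputProb W (u v') (T v) ≤ γ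

/-- The output set in which an error is declared for the message `m'` when `m` is sent and `D` is
the family of decoding sets: a missed identification for `m' = m`, a wrong one otherwise. -/
def errorSet {M Y : Type*} [Fintype Y] [DecidableEq Y] (D : M → Finset Y) (m m' : M) : Finset Y :=
  if m = m' then (D m)ᶜ else D m'

section OneReceiver

variable {X Y ι M Q : Type*} [Fintype Y] {W : X → Y → ℝ} {n : ℕ} {u : ι → Fin n → X}
  {T : ι → Finset (Fin n → Y)} {δ γ : ℝ}

lemma idCodeErr_iff_errorSet [Fintype X] {Q : M → (Fin n → X) → ℝ} {D : M → Finset (Fin n → Y)}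
    {l : ℝ} : IDCodeErr n W Q D l l ↔
      ∀ m m', ∑ x, Q m x * outputProb W x (errorSet D m m') ≤ l := by
  refine ⟨fun h m m' => ?_, fun h => ⟨fun m => ?_, fun m m' hne => ?_⟩⟩
  · rw [errorSet]
    split_ifs with heq
    · exact h.1 m
    · exact h.2 m m' heq
  · have hm := h m m
    rwa [errorSet, if_pos rfl] at hm
  · have hm := h m m'
    rwa [errorSet, if_neg hne] at hm

lemma idCodeErr_of_sum_outputProb_le [Fintype X] [Fintype Q] [Nonempty Q]
    {f : M → Q → Fin n → X} {D : M → Finset (Fin n → Y)} {l : ℝ}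
    (h : ∀ m m', ∑ q, outputProb W (f m q) (errorSet D m m') ≤ l * Fintype.card Q) :
    IDCodeErr n W (fun m x => (Fintype.card Q : ℝ)⁻¹ * ∑ q, if x = f m q then 1 else 0) D l l := by
  refine idCodeErr_iff_errorSet.2 fun m m' => ?_
  simp only [mul_assoc, ← mul_sum, sum_mul]
  rw [sum_comm, inv_mul_le_iff₀ (Nat.cast_pos.2 Fintype.card_pos), mul_comm]
  simpa only [ite_mul, one_mul, zero_mul, sum_ite_eq', mem_univ, if_true] using h m m'

variable [Fintype ι]

lemma IsReliablePool.sum_outputProb_biUnion_le (h : IsReliablePool W u T δ γ) (hW : IsChannel W)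
    (V : Finset ι) : ∑ v, outputProb W (u v) (V.biUnion T) ≤ #V * (1 + γ) := by
  have hpoint : ∀ v, outputProb W (u v) (V.biUnion T) ≤
      ∑ v' ∈ V, if v = v' then 1 else outputProb W (u v) (T v') := by
    intro v
    by_cases hv : v ∈ V
    · have h0 : ∀ v' ∈ V, (0 : ℝ) ≤ if v = v' then 1 else outputProb W (u v) (T v') :=
        fun v' _ => by
          split_ifs
          exacts [zero_le_one, outputProb_nonneg hW _ _]
      exact (outputProb_le_one hW _ _).trans ((if_pos rfl).ge.trans (single_le_sum h0 hv))
    · refine (outputProb_biUnion_le hW _ V T).trans_eq (sum_congr rfl fun v' hv' => ?_)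
      rw [if_neg (ne_of_mem_of_not_mem hv' hv).symm]
  calc ∑ v, outputProb W (u v) (V.biUnion T)
      ≤ ∑ v, ∑ v' ∈ V, if v = v' then 1 else outputProb W (u v) (T v') :=
        sum_le_sum fun v _ => hpoint v
    _ = ∑ v' ∈ V, (1 + ∑ v ∈ univ.erase v', outputProb W (u v) (T v')) := by
        rw [sum_comm]
        refine sum_congr rfl fun v' _ => ?_
        rw [← add_sum_erase _ _ (mem_univ v'), if_pos rfl]
        exact congrArg _ (sum_congr rfl fun v hv => if_neg (ne_of_mem_erase hv))
    _ ≤ #V * (1 + γ) := by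
        rw [← nsmul_eq_mul]
        exact sum_le_card_nsmul _ _ _ fun v' _ => by linarith [h.sum_hit_le v']

lemma IsReliablePool.exists_isSpreadCode [Fintype M] (h : IsReliablePool W u T δ γ)
    (hW : IsChannel W) {p ε s : ℝ}
    (had : IsAdmissible (Fintype.card ι) (Fintype.card M) p ε s γ δ) :
    ∃ V : M → Finset ι, IsSpreadCode p ε s V fun m m' v =>
      outputProb W (u v) (errorSet (fun m => (V m).biUnion T) m m') := by
  obtain ⟨V, hspread, hle, hge, hhit⟩ := exists_isSpread_of_isAdmissible (M := M) had
    (F := fun V v => outputProb W (u v) (V.biUnion T)) (fun V v => outputProb_nonneg hW _ _)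
    (fun V v => outputProb_le_one hW _ _) (h.sum_outputProb_biUnion_le hW)
  refine ⟨V, hspread, hle, fun m m' v => outputProb_nonneg hW _ _,
    fun m m' v => outputProb_le_one hW _ _, fun m m' => ?_⟩
  by_cases hmm : m = m'
  · have hmiss : ∀ v ∈ V m, outputProb W (u v) ((V m).biUnion T)ᶜ ≤ ε / 4 := fun v hv =>
      (outputProb_mono hW _ (compl_subset_compl.2 (subset_biUnion_of_mem T hv))).trans
        ((h.miss_le v).trans (by linarith [had.miss_le]))
    simp only [errorSet, if_pos hmm]
    calc ∑ v ∈ V m, outputProb W (u v) ((V m).biUnion T)ᶜ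
        ≤ #(V m) * (ε / 4) := by
          rw [← nsmul_eq_mul]
          exact sum_le_card_nsmul _ _ _ hmiss
      _ ≤ 4 * (p * Fintype.card ι) * (ε / 4) :=
          mul_le_mul_of_nonneg_right (hge m) (by linarith [had.level_pos])
      _ = ε * (p * Fintype.card ι) := by ring
  · simpa only [errorSet, if_neg hmm] using hhit m m' hmm

end OneReceiver

lemma exists_isReliablePool {X Y1 Y2 Y3 : Type*} [Fintype X] [Fintype Y1] [Fintype Y2]
    [Fintype Y3] {P : X → ℝ} {W1 : X → Y1 → ℝ} {W2 : X → Y2 → ℝ} {W3 : X → Y3 → ℝ} {J1 J2 J3 : ℝ}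
    (hP : IsPMF P) (hW1 : IsChannel W1) (hW2 : IsChannel W2) (hW3 : IsChannel W3)
    (hJ1 : J1 < mutInf P W1) (hJ2 : J2 < mutInf P W2) (hJ3 : J3 < mutInf P W3) :
    ∃ c > 0, ∀ n N : ℕ, ∃ (u : Fin N → Fin n → X) (T1 : Fin N → Finset (Fin n → Y1))
      (T2 : Fin N → Finset (Fin n → Y2)) (T3 : Fin N → Finset (Fin n → Y3)),
      IsReliablePool W1 u T1 (12 * Real.exp (-(n * c))) (24 * N * Real.exp (-(n * J1))) ∧
      IsReliablePool W2 u T2 (12 * Real.exp (-(n * c))) (24 * N * Real.exp (-(n * J2))) ∧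
      IsReliablePool W3 u T3 (12 * Real.exp (-(n * c))) (24 * N * Real.exp (-(n * J3))) := by
  obtain ⟨c1, hc1, hmiss1⟩ := exists_expectation_outputProb_compl_likelySet_le hP hW1 hJ1
  obtain ⟨c2, hc2, hmiss2⟩ := exists_expectation_outputProb_compl_likelySet_le hP hW2 hJ2
  obtain ⟨c3, hc3, hmiss3⟩ := exists_expectation_outputProb_compl_likelySet_le hP hW3 hJ3
  refine ⟨min c1 (min c2 c3), lt_min hc1 (lt_min hc2 hc3), fun n N => ?_⟩
  have hmono : ∀ {c}, min c1 (min c2 c3) ≤ c →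
      Real.exp (-(n * c)) ≤ Real.exp (-(n * min c1 (min c2 c3))) := fun h => by gcongr
  obtain ⟨u, hu⟩ := exists_forall_le_and_sum_erase_le (ι := Fin N)
    (isPMF_prodWeight fun _ : Fin n => hP) (K := Fin 3)
    (δ := fun _ => Real.exp (-(n * min c1 (min c2 c3))))
    (β := ![Real.exp (-(n * J1)), Real.exp (-(n * J2)), Real.exp (-(n * J3))])
    (e := ![fun x => outputProb W1 x (likelySet P W1 J1 x)ᶜ,
      fun x => outputProb W2 x (likelySet P W2 J2 x)ᶜ,
      fun x => outputProb W3 x (likelySet P W3 J3 x)ᶜ])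
    (G := ![fun x z => outputProb W1 z (likelySet P W1 J1 x),
      fun x z => outputProb W2 z (likelySet P W2 J2 x),
      fun x z => outputProb W3 z (likelySet P W3 J3 x)])
    (fun _ => Real.exp_pos _) (by simp [Fin.forall_fin_succ, Real.exp_pos])
    (by simp [Fin.forall_fin_succ, outputProb_nonneg, hW1, hW2, hW3])
    (by simp [Fin.forall_fin_succ, outputProb_nonneg, hW1, hW2, hW3])
    (by simpa [Fin.forall_fin_succ] using ⟨(hmiss1 n).trans (hmono (by simp)),
      (hmiss2 n).trans (hmono (by simp)), (hmiss3 n).trans (hmono (by simp))⟩)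
    (by simp [Fin.forall_fin_succ, expectation_outputProb_likelySet_le, hW1, hW2, hW3])
  rw [Fintype.card_fin, Fintype.card_fin] at hu
  norm_num1 at hu
  exact ⟨u, _, _, _, ⟨fun v => (hu 0 v).1, fun v => (hu 0 v).2⟩,
    ⟨fun v => (hu 1 v).1, fun v => (hu 1 v).2⟩, ⟨fun v => (hu 2 v).1, fun v => (hu 2 v).2⟩⟩

end ReliablePool

section BroadcastCode

variable {X Y1 Y2 Y3 : Type*} [Fintype Y1] [Fintype Y2] [Fintype Y3] {W : X → Y1 → Y2 → Y3 → ℝ}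

lemma isChannel_marg1 (hW : IsBC3 W) : IsChannel (marg1 W) :=
  ⟨fun x _ => sum_nonneg fun _ _ => sum_nonneg fun _ _ => hW.1 x _ _ _, hW.2⟩

lemma isChannel_marg2 (hW : IsBC3 W) : IsChannel (marg2 W) :=
  ⟨fun x _ => sum_nonneg fun _ _ => sum_nonneg fun _ _ => hW.1 x _ _ _,
    fun x => sum_comm.trans (hW.2 x)⟩

lemma isChannel_marg3 (hW : IsBC3 W) : IsChannel (marg3 W) :=
  ⟨fun x _ => sum_nonneg fun _ _ => sum_nonneg fun _ _ => hW.1 x _ _ _,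
    fun x => (sum_comm.trans (sum_congr rfl fun _ _ => sum_comm)).trans (hW.2 x)⟩

variable [Fintype X] {n : ℕ}

lemma isBC3IDCode_of_sum_outputProb_le {k1 k2 k3 : ℕ} (hk1 : 0 < k1) (hk2 : 0 < k2)
    (hk3 : 0 < k3) {f : Fin k1 → Fin k2 → Fin k3 → Fin n → X} {D1 : Fin k1 → Finset (Fin n → Y1)}
    {D2 : Fin k2 → Finset (Fin n → Y2)} {D3 : Fin k3 → Finset (Fin n → Y3)} {l : ℝ}
    (h1 : ∀ m m', ∑ q : Fin k2 × Fin k3, outputProb (marg1 W) (f m q.1 q.2) (errorSet D1 m m') ≤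
      l * Fintype.card (Fin k2 × Fin k3))
    (h2 : ∀ m m', ∑ q : Fin k1 × Fin k3, outputProb (marg2 W) (f q.1 m q.2) (errorSet D2 m m') ≤
      l * Fintype.card (Fin k1 × Fin k3))
    (h3 : ∀ m m', ∑ q : Fin k1 × Fin k2, outputProb (marg3 W) (f q.1 q.2 m) (errorSet D3 m m') ≤
      l * Fintype.card (Fin k1 × Fin k2)) :
    IsBC3IDCode n k1 k2 k3 W (fun m1 m2 m3 x => if x = f m1 m2 m3 then 1 else 0) D1 D2 D3
      l l l l l l := by
  have : NeZero k1 := ⟨hk1.ne'⟩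
  have : NeZero k2 := ⟨hk2.ne'⟩
  have : NeZero k3 := ⟨hk3.ne'⟩
  have hcode1 := idCodeErr_of_sum_outputProb_le (f := fun m (q : Fin k2 × Fin k3) => f m q.1 q.2) h1
  have hcode2 := idCodeErr_of_sum_outputProb_le (f := fun m (q : Fin k1 × Fin k3) => f q.1 m q.2) h2
  have hcode3 := idCodeErr_of_sum_outputProb_le (f := fun m (q : Fin k1 × Fin k2) => f q.1 q.2 m) h3
  simp only [Fintype.card_prod, Fintype.card_fin, Fintype.sum_prod_type] at hcode1 hcode2 hcode3
  refine ⟨fun m1 m2 m3 => ⟨fun x => ?_, ?_⟩, hcode1, hcode2, hcode3⟩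
  · positivity
  · rw [sum_ite_eq', if_pos (mem_univ _)]

lemma exists_isBC3IDCode (hW : IsBC3 W) {N k1 k2 k3 : ℕ} (hN : 0 < N) (hk1 : 0 < k1)
    (hk2 : 0 < k2) (hk3 : 0 < k3) {u : Fin N → Fin n → X} {T1 : Fin N → Finset (Fin n → Y1)}
    {T2 : Fin N → Finset (Fin n → Y2)} {T3 : Fin N → Finset (Fin n → Y3)}
    {p1 p2 p3 ε δ γ1 γ2 γ3 : ℝ} (hu1 : IsReliablePool (marg1 W) u T1 δ γ1)
    (hu2 : IsReliablePool (marg2 W) u T2 δ γ2) (hu3 : IsReliablePool (marg3 W) u T3 δ γ3)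
    (had1 : IsAdmissible N k1 p1 ε (N * (p1 * p2 * p3) / 64) γ1 δ)
    (had2 : IsAdmissible N k2 p2 ε (N * (p1 * p2 * p3) / 64) γ2 δ)
    (had3 : IsAdmissible N k3 p3 ε (N * (p1 * p2 * p3) / 64) γ3 δ) :
    ∃ (f : Fin k1 → Fin k2 → Fin k3 → Fin n → X) (D1 : Fin k1 → Finset (Fin n → Y1))
      (D2 : Fin k2 → Finset (Fin n → Y2)) (D3 : Fin k3 → Finset (Fin n → Y3)),
      IsBC3IDCode n k1 k2 k3 W (fun m1 m2 m3 x => if x = f m1 m2 m3 then 1 else 0) D1 D2 D3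
        (4104 * ε) (4104 * ε) (4104 * ε) (4104 * ε) (4104 * ε) (4104 * ε) := by
  have : Nonempty (Fin N) := ⟨⟨0, hN⟩⟩
  have hcard : ∀ k : ℕ, (k : ℝ) = Fintype.card (Fin k) := fun k => by rw [Fintype.card_fin]
  rw [hcard N, hcard k1] at had1
  rw [hcard N, hcard k2] at had2
  rw [hcard N, hcard k3] at had3
  obtain ⟨V1, hV1⟩ := hu1.exists_isSpreadCode (isChannel_marg1 hW) had1
  obtain ⟨V2, hV2⟩ := hu2.exists_isSpreadCode (isChannel_marg2 hW) had2
  obtain ⟨V3, hV3⟩ := hu3.exists_isSpreadCode (isChannel_marg3 hW) had3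
  obtain ⟨x, hx1, hx2, hx3⟩ := exists_selection had1 had2 had3 hV1 hV2 hV3 rfl
  exact ⟨fun m1 m2 m3 => u (x m1 m2 m3), _, _, _,
    isBC3IDCode_of_sum_outputProb_le hk1 hk2 hk3 hx1 hx2 hx3⟩

end BroadcastCode

section Rates

lemma two_mul_lt_sum_min {a b c ρ : ℝ} (hρ : 0 < ρ) (hρa : ρ < a) (hρbc : ρ < b + c)
    (hb : 0 < b) (hc : 0 < c) : 2 * ρ < min a ρ + min b ρ + min c ρ := by
  rw [min_eq_right hρa.le]
  rcases min_cases b ρ with ⟨hb', _⟩ | ⟨hb', _⟩ <;>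
    rcases min_cases c ρ with ⟨hc', _⟩ | ⟨hc', _⟩ <;> linarith

lemma exists_rates {R1 R2 R3 I1 I2 I3 : ℝ} (hR10 : 0 < R1) (hR20 : 0 < R2) (hR30 : 0 < R3)
    (hR1 : R1 < min I1 (I2 + I3)) (hR2 : R2 < min I2 (I1 + I3)) (hR3 : R3 < min I3 (I1 + I2)) :
    ∃ ρ t r1 r2 r3 : ℝ, 0 < t ∧ (R1 + t < r1 ∧ r1 + t < min ρ (I1 - t)) ∧
      (R2 + t < r2 ∧ r2 + t < min ρ (I2 - t)) ∧ (R3 + t < r3 ∧ r3 + t < min ρ (I3 - t)) ∧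
      2 * ρ + t < r1 + r2 + r3 := by
  rw [lt_min_iff] at hR1 hR2 hR3
  obtain ⟨m, hm1, hm2, hm3, hm⟩ : ∃ m, R1 ≤ m ∧ R2 ≤ m ∧ R3 ≤ m ∧
      2 * m < min I1 m + min I2 m + min I3 m := by
    have h1 := two_mul_lt_sum_min hR10 hR1.1 hR1.2 (hR20.trans hR2.1) (hR30.trans hR3.1)
    have h2 := two_mul_lt_sum_min hR20 hR2.1 hR2.2 (hR10.trans hR1.1) (hR30.trans hR3.1)
    have h3 := two_mul_lt_sum_min hR30 hR3.1 hR3.2 (hR10.trans hR1.1) (hR20.trans hR2.1)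
    rcases le_total R1 R2 with h12 | h12 <;> rcases le_total R2 R3 with h23 | h23 <;>
      rcases le_total R1 R3 with h13 | h13
    all_goals first
      | exact ⟨R1, le_rfl, by assumption, by assumption, h1⟩
      | exact ⟨R2, by assumption, le_rfl, by assumption, by linarith⟩
      | exact ⟨R3, by linarith, by linarith, le_rfl, by linarith⟩
  obtain ⟨t, ht0, ht⟩ := exists_between (lt_min (lt_min (sub_pos.2 hR1.1) (sub_pos.2 hR2.1))
    (lt_min (sub_pos.2 hR3.1) (sub_pos.2 hm)))
  simp only [lt_min_iff] at ht
  obtain ⟨⟨ht1, ht2⟩, ht3, htm⟩ := ht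
  have hmono : ∀ I, min I m ≤ min I (m + t / 4) := fun I => min_le_min le_rfl (by linarith)
  have hrate : ∀ {R I}, R ≤ m → t < I - R →
      R + t / 20 < min I (m + t / 4) - 3 * (t / 20) ∧
        min I (m + t / 4) - 3 * (t / 20) + t / 20 < min (m + t / 4) (I - t / 20) := by
    intro R I hRm hRI
    rw [lt_sub_iff_add_lt, lt_min_iff, lt_min_iff]
    have hI := min_le_left I (m + t / 4)
    have hm' := min_le_right I (m + t / 4)
    refine ⟨⟨?_, ?_⟩, ?_, ?_⟩ <;> linarith
  refine ⟨m + t / 4, t / 20, _, _, _, by positivity, hrate hm1 ht1, hrate hm2 ht2,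
    hrate hm3 ht3, ?_⟩
  linarith [hmono I1, hmono I2, hmono I3]

end Rates

section Asymptotics

open Filter

lemma eventually_const_mul_exp_le {a b : ℝ} (hab : a < b) (C : ℝ) :
    ∀ᶠ n : ℕ in atTop, C * Real.exp (n * a) ≤ Real.exp (n * b) := by
  have h : Tendsto (fun n : ℕ => Real.exp (n * (b - a))) atTop atTop :=
    Real.tendsto_exp_atTop.comp (tendsto_natCast_atTop_atTop.atTop_mul_const (sub_pos.2 hab))
  filter_upwards [h.eventually_ge_atTop C] with n hn
  calc C * Real.exp (n * a) ≤ Real.exp (n * (b - a)) * Real.exp (n * a) := by gcongr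
    _ = Real.exp (n * b) := by rw [← Real.exp_add]; ring_nf

lemma eventually_const_mul_exp_le_exp_exp {R : ℝ} (hR : 0 < R) (c C : ℝ) :
    ∀ᶠ n : ℕ in atTop, C * Real.exp (n * c) ≤ Real.exp (Real.exp (n * R)) := by
  have hlin : Tendsto (fun n : ℕ => n * (R ^ 2 / 2)) atTop atTop :=
    tendsto_natCast_atTop_atTop.atTop_mul_const (by positivity)
  filter_upwards [eventually_const_mul_exp_le (lt_add_one c) C,
    hlin.eventually_ge_atTop (c + 1)] with n hexp hn
  refine hexp.trans (Real.exp_le_exp.2 ?_)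
  calc n * (c + 1) ≤ n * (n * (R ^ 2 / 2)) := by gcongr
    _ = (n * R) ^ 2 / 2 := by ring
    _ ≤ Real.exp (n * R) := by
      have hnR : 0 ≤ n * R := by positivity
      linarith [Real.quadratic_le_exp_of_nonneg hnR]

/-- The number of candidate input sequences of length `n` at rate `ρ`. -/
def poolSize (ρ : ℝ) (n : ℕ) : ℕ := ⌈Real.exp (n * ρ)⌉₊

/-- The number of messages of an identification code of length `n` and rate `R`; identification
rates are doubly exponential. -/
def messageCount (R : ℝ) (n : ℕ) : ℕ := ⌈Real.exp (Real.exp (n * R))⌉₊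

/-- The parameter `ε` of the random construction that leads to error probability `exp (-nα)`,
which `exists_isBC3IDCode` achieves up to the factor `4104`. -/
def errorLevel (α : ℝ) (n : ℕ) : ℝ := Real.exp (-(n * α)) / 4104

lemma mul_errorLevel (α : ℝ) (n : ℕ) : 4104 * errorLevel α n = Real.exp (-(n * α)) :=
  mul_div_cancel₀ _ (by norm_num)

lemma le_poolSize (ρ : ℝ) (n : ℕ) : Real.exp (n * ρ) ≤ poolSize ρ n := Nat.le_ceil _

lemma poolSize_pos (ρ : ℝ) (n : ℕ) : 0 < poolSize ρ n := Nat.ceil_pos.2 (Real.exp_pos _)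

lemma poolSize_le {ρ : ℝ} (hρ : 0 ≤ ρ) (n : ℕ) : (poolSize ρ n : ℝ) ≤ 2 * Real.exp (n * ρ) := by
  have hone : 1 ≤ Real.exp (n * ρ) := Real.one_le_exp (by positivity)
  have hceil := Nat.ceil_lt_add_one (Real.exp_pos (n * ρ)).le
  rw [poolSize]
  linarith

lemma le_messageCount (R : ℝ) (n : ℕ) : Real.exp (Real.exp (n * R)) ≤ messageCount R n :=
  Nat.le_ceil _

lemma messageCount_pos (R : ℝ) (n : ℕ) : 0 < messageCount R n := Nat.ceil_pos.2 (Real.exp_pos _)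

lemma exp_le_log_messageCount (R : ℝ) (n : ℕ) :
    Real.exp (n * R) ≤ Real.log (messageCount R n) :=
  (Real.le_log_iff_exp_le (Nat.cast_pos.2 (messageCount_pos R n))).2 (le_messageCount R n)

lemma log_messageCount_le {R : ℝ} (hR : 0 ≤ R) (n : ℕ) :
    Real.log (messageCount R n) ≤ 2 * Real.exp (n * R) := by
  have hone : 1 ≤ Real.exp (n * R) := Real.one_le_exp (by positivity)
  have hceil := Nat.ceil_lt_add_one (Real.exp_pos (Real.exp (n * R))).le
  rw [Real.log_le_iff_le_exp (Nat.cast_pos.2 (messageCount_pos R n)), two_mul, Real.exp_add,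
    messageCount]
  nlinarith [Real.add_one_le_exp (Real.exp (n * R))]

lemma le_log_log_messageCount (R : ℝ) {n : ℕ} (hn : 0 < n) :
    R ≤ 1 / n * Real.log (Real.log (messageCount R n)) := by
  rw [one_div, le_inv_mul_iff₀ (Nat.cast_pos.2 hn)]
  have hlog := exp_le_log_messageCount R n
  exact (Real.le_log_iff_exp_le ((Real.exp_pos _).trans_le hlog)).2 hlog

lemma exp_le_density_mul_poolSize (ρ r : ℝ) (n : ℕ) :
    Real.exp (n * r) ≤ Real.exp (-(n * (ρ - r))) * poolSize ρ n := by
  calc Real.exp (n * r) = Real.exp (-(n * (ρ - r))) * Real.exp (n * ρ) := by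
        rw [← Real.exp_add]; ring_nf
    _ ≤ Real.exp (-(n * (ρ - r))) * poolSize ρ n := by gcongr; exact le_poolSize ρ n

lemma eventually_density_le {ρ r J α : ℝ} (hρ : 0 ≤ ρ) (hrρ : r + α < ρ) (hrJ : r + α < J) :
    ∀ᶠ n : ℕ in atTop, 16 * Real.exp (-(n * (ρ - r))) *
      (1 + 24 * poolSize ρ n * Real.exp (-(n * J))) ≤ errorLevel α n := by
  filter_upwards [eventually_const_mul_exp_le (show r - ρ < -α by linarith) (2 * 16 * 4104),
    eventually_const_mul_exp_le (show r - J < -α by linarith) (2 * 768 * 4104)] with n hpool hJ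
  calc 16 * Real.exp (-(n * (ρ - r))) * (1 + 24 * poolSize ρ n * Real.exp (-(n * J)))
      ≤ 16 * Real.exp (-(n * (ρ - r))) *
          (1 + 24 * (2 * Real.exp (n * ρ)) * Real.exp (-(n * J))) := by
        gcongr
        exact poolSize_le hρ n
    _ = 16 * Real.exp (-(n * (ρ - r))) +
          768 * (Real.exp (-(n * (ρ - r))) * Real.exp (n * ρ) * Real.exp (-(n * J))) := by ring
    _ = 16 * Real.exp (n * (r - ρ)) + 768 * Real.exp (n * (r - J)) := by
        rw [← Real.exp_add, ← Real.exp_add]; ring_nf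
    _ ≤ errorLevel α n := by rw [errorLevel, ← mul_neg]; linarith

lemma eventually_log_messageCount_le {R ρ r α : ℝ} (hR : 0 ≤ R) (hRr : R + α < r) :
    ∀ᶠ n : ℕ in atTop, 4 * (Real.log (messageCount R n) + 3) ≤
      errorLevel α n * (Real.exp (-(n * (ρ - r))) * poolSize ρ n) := by
  filter_upwards [eventually_const_mul_exp_le (show R < r - α by linarith) (20 * 4104)] with n hn
  have hone : 1 ≤ Real.exp (n * R) := Real.one_le_exp (by positivity)
  calc 4 * (Real.log (messageCount R n) + 3) ≤ 20 * Real.exp (n * R) := by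
        linarith [log_messageCount_le hR n]
    _ ≤ Real.exp (n * (r - α)) / 4104 := by linarith
    _ = errorLevel α n * Real.exp (n * r) := by
        rw [errorLevel, div_mul_eq_mul_div, ← Real.exp_add]; ring_nf
    _ ≤ errorLevel α n * (Real.exp (-(n * (ρ - r))) * poolSize ρ n) :=
        mul_le_mul_of_nonneg_left (exp_le_density_mul_poolSize ρ r n)
          (div_nonneg (Real.exp_pos _).le (by norm_num))

lemma eventually_poolSize_le_density_mul_messageCount {R ρ : ℝ} (hR : 0 < R) (hρ : 0 ≤ ρ)
    (r : ℝ) : ∀ᶠ n : ℕ in atTop, 2 * ((poolSize ρ n : ℝ) + 3) ≤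
      Real.exp (-(n * (ρ - r))) * messageCount R n := by
  filter_upwards [eventually_const_mul_exp_le_exp_exp hR (2 * ρ - r) 10] with n hn
  have hone : 1 ≤ Real.exp (n * ρ) := Real.one_le_exp (by positivity)
  calc 2 * ((poolSize ρ n : ℝ) + 3) ≤ 10 * Real.exp (n * ρ) := by linarith [poolSize_le hρ n]
    _ = Real.exp (-(n * (ρ - r))) * (10 * Real.exp (n * (2 * ρ - r))) := by
        rw [mul_left_comm, ← Real.exp_add]; ring_nf
    _ ≤ Real.exp (-(n * (ρ - r))) * messageCount R n := by
        gcongr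
        exact hn.trans (le_messageCount R n)

lemma eventually_exp_neg_le_errorLevel {ρ r1 r2 r3 α : ℝ} (h : 2 * ρ + α < r1 + r2 + r3) :
    ∀ᶠ n : ℕ in atTop, Real.exp (-(poolSize ρ n * (Real.exp (-(n * (ρ - r1))) *
      Real.exp (-(n * (ρ - r2))) * Real.exp (-(n * (ρ - r3)))) / 64)) ≤ errorLevel α n / 4 := by
  filter_upwards [eventually_const_mul_exp_le (show α < r1 + r2 + r3 - 2 * ρ by linarith)
    (64 * 4 * 4104)] with n hn
  set κ := poolSize ρ n * (Real.exp (-(n * (ρ - r1))) * Real.exp (-(n * (ρ - r2))) *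
    Real.exp (-(n * (ρ - r3))))
  have hκ : Real.exp (n * (r1 + r2 + r3 - 2 * ρ)) ≤ κ := by
    calc Real.exp (n * (r1 + r2 + r3 - 2 * ρ)) = Real.exp (n * ρ) * (Real.exp (-(n * (ρ - r1))) *
          Real.exp (-(n * (ρ - r2))) * Real.exp (-(n * (ρ - r3)))) := by
          rw [← Real.exp_add, ← Real.exp_add, ← Real.exp_add]; ring_nf
      _ ≤ κ := mul_le_mul_of_nonneg_right (le_poolSize ρ n) (by positivity)
  rw [errorLevel, div_div, Real.exp_neg, Real.exp_neg, inv_eq_one_div, inv_eq_one_div, div_div]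
  refine one_div_le_one_div_of_le (by positivity) ?_
  linarith [Real.add_one_le_exp (κ / 64)]

lemma eventually_isAdmissible {R ρ r J α c : ℝ} {s : ℕ → ℝ} (hR : 0 < R) (hα : 0 < α)
    (hαc : α < c) (hRr : R + α < r) (hr : r + α < min ρ J)
    (hs : ∀ᶠ n in atTop, Real.exp (-s n) ≤ errorLevel α n / 4) :
    ∀ᶠ n : ℕ in atTop, IsAdmissible (poolSize ρ n) (messageCount R n)
      (Real.exp (-(n * (ρ - r)))) (errorLevel α n) (s n)
      (24 * poolSize ρ n * Real.exp (-(n * J))) (12 * Real.exp (-(n * c))) := by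
  rw [lt_min_iff] at hr
  have hρ : 0 ≤ ρ := by linarith
  filter_upwards [hs, eventually_density_le hρ hr.1 hr.2, eventually_log_messageCount_le hR.le hRr,
    eventually_poolSize_le_density_mul_messageCount hR hρ r,
    eventually_const_mul_exp_le (neg_lt_neg hαc) (4 * 12 * 4104)]
    with n hs hdensity hlog hground hmiss
  simp only [mul_neg] at hmiss
  refine ⟨Real.exp_pos _, ?_, by positivity, hdensity, ?_, hs, hlog, hground⟩
  · have hexp : Real.exp (-(n * α)) ≤ 1 := Real.exp_le_one_iff.2 (neg_nonpos.2 (by positivity))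
    rw [errorLevel]
    linarith
  · rw [errorLevel]
    linarith

end Asymptotics

/-- **Theorem 7.** Inner bound for the three-receiver BC, with
exponentially decaying error probabilities and deterministic encoders. -/
theorem bc3_id_inner_bound_deterministic
    {X Y1 Y2 Y3 : Type} [Fintype X] [Fintype Y1] [Fintype Y2] [Fintype Y3]
    [Nonempty X] [Nonempty Y1] [Nonempty Y2] [Nonempty Y3]
    (W : X → Y1 → Y2 → Y3 → ℝ) (hW : IsBC3 W)
    (P : X → ℝ) (hP : IsPMF P)
    (R1 R2 R3 : ℝ)
    (hR10 : 0 < R1) (hR1 : R1 < min (mutInf P (marg1 W)) (mutInf P (marg2 W) + mutInf P (marg3 W)))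
    (hR20 : 0 < R2) (hR2 : R2 < min (mutInf P (marg2 W)) (mutInf P (marg1 W) + mutInf P (marg3 W)))
    (hR30 : 0 < R3) (hR3 : R3 < min (mutInf P (marg3 W)) (mutInf P (marg1 W) + mutInf P (marg2 W))) :
    ∃ τ : ℝ, 0 < τ ∧ ∃ n₀ : ℕ, ∀ n : ℕ, n₀ ≤ n →
      ∃ (k1 k2 k3 : ℕ) (Q : Fin k1 → Fin k2 → Fin k3 → (Fin n → X) → ℝ)
        (D1 : Fin k1 → Finset (Fin n → Y1))
        (D2 : Fin k2 → Finset (Fin n → Y2))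
        (D3 : Fin k3 → Finset (Fin n → Y3)),
        IsBC3IDCode n k1 k2 k3 W Q D1 D2 D3
          (Real.exp (-(n * τ))) (Real.exp (-(n * τ)))
          (Real.exp (-(n * τ))) (Real.exp (-(n * τ)))
          (Real.exp (-(n * τ))) (Real.exp (-(n * τ))) ∧
        R1 ≤ (1 / n) * Real.log (Real.log k1) ∧
        R2 ≤ (1 / n) * Real.log (Real.log k2) ∧
        R3 ≤ (1 / n) * Real.log (Real.log k3) ∧
        ∀ m1 m2 m3, ∃ x0 : Fin n → X, ∀ x, Q m1 m2 m3 x = if x = x0 then 1 else 0 := by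
  obtain ⟨ρ, t, r1, r2, r3, ht, ⟨hR1, hr1⟩, ⟨hR2, hr2⟩, ⟨hR3, hr3⟩, hr⟩ :=
    exists_rates hR10 hR20 hR30 hR1 hR2 hR3
  obtain ⟨c, hc, hpool⟩ := exists_isReliablePool hP (isChannel_marg1 hW) (isChannel_marg2 hW)
    (isChannel_marg3 hW) (sub_lt_self _ ht) (sub_lt_self _ ht) (sub_lt_self _ ht)
  obtain ⟨α, hα, hαtc⟩ := exists_between (lt_min ht hc)
  obtain ⟨hαt, hαc⟩ := lt_min_iff.1 hαtc
  have hs := eventually_exp_neg_le_errorLevel (show 2 * ρ + α < r1 + r2 + r3 by linarith)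
  refine ⟨α, hα, Filter.eventually_atTop.1 ?_⟩
  filter_upwards [Filter.eventually_gt_atTop 0,
    eventually_isAdmissible hR10 hα hαc (hR1.trans_le' (by linarith))
      (hr1.trans_le' (by linarith)) hs,
    eventually_isAdmissible hR20 hα hαc (hR2.trans_le' (by linarith))
      (hr2.trans_le' (by linarith)) hs,
    eventually_isAdmissible hR30 hα hαc (hR3.trans_le' (by linarith))
      (hr3.trans_le' (by linarith)) hs] with n hn had1 had2 had3
  obtain ⟨u, T1, T2, T3, hu1, hu2, hu3⟩ := hpool n (poolSize ρ n)
  obtain ⟨f, D1, D2, D3, hcode⟩ := exists_isBC3IDCode hW (poolSize_pos ρ n)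
    (messageCount_pos R1 n) (messageCount_pos R2 n) (messageCount_pos R3 n) hu1 hu2 hu3
    had1 had2 had3
  rw [mul_errorLevel] at hcode
  exact ⟨_, _, _, _, D1, D2, D3, hcode, le_log_log_messageCount R1 hn,
    le_log_log_messageCount R2 hn, le_log_log_messageCount R3 hn,
    fun m1 m2 m3 => ⟨f m1 m2 m3, fun _ => rfl⟩⟩
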